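/- arXiv:1501.03420 — 2 statements merged into one kernel-verified Lean document; each statement's English description precedes it below -/
import Mathlib

section
/- Let {λ_n}_{n≥0} and {μ_n}_{n≥0} satisfy λ_n > 0, μ_{n+1} > 0 for n ≥ 0 and μ_0 ≥ 0, and let Q be the birth–death generator acting on ℓ²(π). Let a = (μ_1, λ_1, μ_2, λ_2, μ_3, λ_3, …) be the interlaced sequence. Assume: (a) a_n → ∞; (b) ∑_{n≥0} 1/a_n = ∞; (c) ∑_{n≥0} [ a_{n+1}/a_n − 1 ]⁻ < ∞. Then Q is self-adjoint, σ_p(Q) = ∅, and σ(Q) = (−∞, 0]. -/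
open Filter Topology

noncomputable section

/-- Membership in the weighted ℓ² space with weight `w`. -/
def MemL2w (w : ℕ → ℝ) (f : ℕ → ℂ) : Prop :=
  Summable fun n => w n * ‖f n‖ ^ 2

/-- The weighted ℓ² inner product. -/
def innerW (w : ℕ → ℝ) (f g : ℕ → ℂ) : ℂ :=
  ∑' n, (w n : ℂ) * star (f n) * g n

/-- The formal tridiagonal action of the Jacobi matrix with off-diagonal entries `a`
and diagonal entries `b`:  `(Cx)₀ = b₀x₀ + a₀x₁`,
`(Cx)ₙ = aₙ₋₁xₙ₋₁ + bₙxₙ + aₙxₙ₊₁` for `n ≥ 1`. -/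
def jacobiAct (a b : ℕ → ℝ) (x : ℕ → ℂ) : ℕ → ℂ
  | 0 => (b 0 : ℂ) * x 0 + (a 0 : ℂ) * x 1
  | n + 1 => (a n : ℂ) * x n + (b (n + 1) : ℂ) * x (n + 1) + (a (n + 1) : ℂ) * x (n + 2)

/-- The maximal domain of the formal operator `T` inside the weighted ℓ² space. -/
def DomW (w : ℕ → ℝ) (T : (ℕ → ℂ) → ℕ → ℂ) : Set (ℕ → ℂ) :=
  {x | MemL2w w x ∧ MemL2w w (T x)}

/-- `T`, on its maximal domain in weighted ℓ², is self-adjoint: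
the graph of the adjoint operator coincides with the graph of `T`. -/
def IsSelfAdjointW (w : ℕ → ℝ) (T : (ℕ → ℂ) → ℕ → ℂ) : Prop :=
  ∀ y z : ℕ → ℂ, MemL2w w y → MemL2w w z →
    ((∀ x ∈ DomW w T, innerW w (T x) y = innerW w x z) ↔ (y ∈ DomW w T ∧ T y = z))

/-- The point spectrum (set of eigenvalues) of `T` on its maximal domain. -/
def eigenW (w : ℕ → ℝ) (T : (ℕ → ℂ) → ℕ → ℂ) : Set ℂ :=
  {l | ∃ x ∈ DomW w T, x ≠ 0 ∧ T x = fun n => l * x n}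

/-- The spectrum of `T`: those `l` for which `T - l` is not a bijection from the maximal
domain onto the weighted ℓ² space (for a closed operator this is the usual spectrum). -/
def spectrumW (w : ℕ → ℝ) (T : (ℕ → ℂ) → ℕ → ℂ) : Set ℂ :=
  {l | ¬ ((∀ x ∈ DomW w T, T x = (fun n => l * x n) → x = 0) ∧
          ∀ y : ℕ → ℂ, MemL2w w y → ∃ x ∈ DomW w T, (fun n => T x n - l * x n) = y)}

/-- The essential spectrum: the set of accumulation points of the spectrum. -/
def essSpectrumW (w : ℕ → ℝ) (T : (ℕ → ℂ) → ℕ → ℂ) : Set ℂ :=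
  {z | AccPt z (𝓟 (spectrumW w T))}

/-- The formal action of the birth and death process generator `Q`. -/
def bdAct (l m : ℕ → ℝ) (x : ℕ → ℂ) : ℕ → ℂ
  | 0 => (-(l 0 + m 0) : ℝ) * x 0 + (l 0 : ℝ) * x 1
  | n + 1 => (m (n + 1) : ℝ) * x n + (-(l (n + 1) + m (n + 1)) : ℝ) * x (n + 1)
      + (l (n + 1) : ℝ) * x (n + 2)

/-- The weights `π₀ = 1`, `πₙ = (λ₀⋯λₙ₋₁)/(μ₁⋯μₙ)` of the space `ℓ²(π)`. -/
def bdPi (l m : ℕ → ℝ) : ℕ → ℝ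
  | 0 => 1
  | n + 1 => bdPi l m n * (l n / m (n + 1))

/-- The interlaced sequence `a = (μ₁, λ₁, μ₂, λ₂, μ₃, λ₃, …)`. -/
def interlace (l m : ℕ → ℝ) : ℕ → ℝ :=
  fun n => if n % 2 = 0 then m (n / 2 + 1) else l (n / 2 + 1)

/-!
Write `κₙ = πₙ λₙ = πₙ₊₁ μₙ₊₁` and let `fₙ = κₙ (xₙ₊₁ - xₙ)` be the flux of `x`, whose discrete
divergence is `π * Q x` up to the killing term at `0`. Almost monotonicity of the interlaced rates
bounds `κ` from below and `π` from above, so that `∑ 1/λₙ`, `∑ πₙ`, `∑ 1/κₙ` and `∑ 1/√λₙ` all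
diverge.

*Self-adjointness.* Every `x` in the maximal domain has finite energy `∑ |fₙ|²/κₙ`: otherwise
summation by parts makes `|x|` eventually nondecreasing, contradicting `∑ πₙ = ∞`. The boundary term
`x̄ₙ fₙ` then converges, and its limit is `0` by the Carleman-type condition `∑ 1/√λₙ = ∞`. The
resulting form identity makes `Q` symmetric, and testing against unit vectors shows that its adjoint
is contained in the maximal operator.

*The half-line `(-∞, 0]`.* If `s > 0` and `Q x = -s x` at all indices `n ≥ 1`, then `(x, f)`
solves a first-order system with coefficients `1/κ` and `-s π`, whose energy `κ |x|² + |f|²/(s π)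
+ Re x̄ f` is nondecreasing up to a summable relative error. Unless `x = 0`, the energy stays away
from `0`, and the summable sequence `s π |x|² + |f|²/κ` dominates a multiple of `1/λ`. If `s = 0`
the flux is constant, and `∑ 1/κₙ = ∑ πₙ = ∞` gives `x = 0`. Hence no `-s` is an eigenvalue, nor
does `(Q + s) x = δ₀` have a solution in the domain.

*The resolvent set.* For `z ∉ (-∞, 0]` the form identity gives injectivity of `Q - z`, and it bounds
the solution of `(Q - z) x = y` with Dirichlet condition at `K + 1` uniformly in `K`. Solutions of
the recurrence depend continuously on `x₀`, and a compactness argument for the initial values yields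
one in `ℓ²(π)`.
-/

/-! ### Sequences almost below one another -/

lemma summable_of_eventually_le_const_mul {f g : ℕ → ℝ} {C : ℝ} (hg : Summable g)
    (hf : ∀ n, 0 ≤ f n) (h : ∀ᶠ n in atTop, f n ≤ C * g n) : Summable f := by
  refine .of_norm_bounded_eventually_nat (hg.mul_left C) ?_
  filter_upwards [h] with n hn
  rwa [Real.norm_of_nonneg (hf n)]

/-- `AlmostLE a b` says that `a ≤ b` eventually, up to a relative error that is summable.
Condition (c) on a positive sequence is this relation between the sequence and its shift. -/
def AlmostLE (a b : ℕ → ℝ) : Prop :=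
  ∃ η : ℕ → ℝ, Summable η ∧ (∀ n, 0 ≤ η n) ∧ ∀ᶠ n in atTop, (1 - η n) * a n ≤ b n

namespace AlmostLE

variable {a b c : ℕ → ℝ}

lemma of_summable_ratio (ha : ∀ n, 0 < a n)
    (h : Summable fun n => max (-(b n / a n - 1)) 0) : AlmostLE a b := by
  refine ⟨_, h, fun n => le_max_right _ _, .of_forall fun n => ?_⟩
  rw [← le_div_iff₀ (ha n)]
  linarith [le_max_left (-(b n / a n - 1)) 0]

lemma comp_injective (h : AlmostLE a b) {φ : ℕ → ℕ} (hφ : φ.Injective) :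
    AlmostLE (fun n => a (φ n)) (fun n => b (φ n)) := by
  obtain ⟨η, hη, hη0, hab⟩ := h
  exact ⟨fun n => η (φ n), hη.comp_injective hφ, fun n => hη0 _,
    hφ.nat_tendsto_atTop.eventually hab⟩

lemma of_succ (h : AlmostLE (fun n => a (n + 1)) (fun n => b (n + 1))) : AlmostLE a b := by
  obtain ⟨η, hη, hη0, hab⟩ := h
  refine ⟨fun n => η (n - 1), (summable_nat_add_iff 1).1 hη, fun n => hη0 _, ?_⟩
  rw [← map_add_atTop_eq_nat 1]
  exact eventually_map.2 hab

lemma mul_left (h : AlmostLE a b) {w : ℕ → ℝ} (hw : ∀ n, 0 ≤ w n) :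
    AlmostLE (fun n => w n * a n) (fun n => w n * b n) := by
  obtain ⟨η, hη, hη0, hab⟩ := h
  refine ⟨η, hη, hη0, hab.mono fun n hn => ?_⟩
  rw [mul_left_comm]
  exact mul_le_mul_of_nonneg_left hn (hw n)

lemma eventually_half_le (h : AlmostLE a b) (ha : ∀ᶠ n in atTop, 0 ≤ a n) :
    ∀ᶠ n in atTop, a n / 2 ≤ b n := by
  obtain ⟨η, hη, -, hab⟩ := h
  filter_upwards [hab, ha, hη.tendsto_atTop_zero.eventually_le_const one_half_pos]
    with n hab ha hη
  nlinarith

lemma trans (hab : AlmostLE a b) (hbc : AlmostLE b c) (ha : ∀ᶠ n in atTop, 0 ≤ a n) :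
    AlmostLE a c := by
  obtain ⟨η, hη, hη0, hab⟩ := hab
  obtain ⟨θ, hθ, hθ0, hbc⟩ := hbc
  refine ⟨fun n => η n + θ n, hη.add hθ, fun n => add_nonneg (hη0 n) (hθ0 n), ?_⟩
  filter_upwards [hab, hbc, ha, hθ.tendsto_atTop_zero.eventually_le_const one_pos]
    with n hab hbc ha hθ1
  calc (1 - (η n + θ n)) * a n
      ≤ (1 - θ n) * ((1 - η n) * a n) := by
        nlinarith [mul_nonneg (mul_nonneg (hη0 n) (hθ0 n)) ha]
    _ ≤ (1 - θ n) * b n := mul_le_mul_of_nonneg_left hab (by linarith)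
    _ ≤ c n := hbc

lemma tendsto_atTop (h : AlmostLE a b) (ha : Tendsto a atTop atTop) : Tendsto b atTop atTop :=
  tendsto_atTop_mono' _ (h.eventually_half_le (ha.eventually_ge_atTop 0))
    (ha.atTop_div_const two_pos)

lemma summable_inv (h : AlmostLE a b) (ha : ∀ n, 0 < a n) (hb : ∀ n, 0 < b n)
    (hs : Summable fun n => 1 / a n) : Summable fun n => 1 / b n := by
  refine summable_of_eventually_le_const_mul (C := 2) hs (fun n => (one_div_pos.2 (hb n)).le) ?_
  filter_upwards [h.eventually_half_le (.of_forall fun n => (ha n).le)] with n hn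
  rw [mul_one_div, div_le_div_iff₀ (hb n) (ha n)]
  linarith

/-- With `T n` the sum of the errors from `n` on, `a n * (1 - T n)` is eventually nondecreasing. -/
lemma exists_pos_le (h : AlmostLE a fun n => a (n + 1)) (ha : ∀ᶠ n in atTop, 0 < a n) :
    ∃ δ > 0, ∀ᶠ n in atTop, δ ≤ a n := by
  obtain ⟨η, hη, hη0, hstep⟩ := h
  set T : ℕ → ℝ := fun n => ∑' k, η (k + n) with hT
  have T_nonneg n : 0 ≤ T n := tsum_nonneg fun k => hη0 _
  have T_eq n : T n = η n + T (n + 1) := by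
    simp only [hT]
    rw [((summable_nat_add_iff n).2 hη).tsum_eq_zero_add]
    simp only [zero_add, add_right_comm _ 1 n, add_assoc]
  obtain ⟨N, hN⟩ := eventually_atTop.1
    (((tendsto_sum_nat_add η).eventually_lt_const one_pos).and (ha.and hstep))
  have mono : ∀ n ≥ N, a n * (1 - T n) ≤ a (n + 1) * (1 - T (n + 1)) := fun n hn => by
    obtain ⟨-, ha, hstep⟩ := hN n hn
    have hT1 : T (n + 1) < 1 := (hN (n + 1) (by omega)).1
    calc a n * (1 - T n) ≤ (1 - η n) * a n * (1 - T (n + 1)) := by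
          rw [T_eq n]
          nlinarith [mul_nonneg (mul_nonneg ha.le (hη0 n)) (T_nonneg (n + 1))]
      _ ≤ a (n + 1) * (1 - T (n + 1)) := mul_le_mul_of_nonneg_right hstep (by linarith)
  refine ⟨a N * (1 - T N), mul_pos (hN N le_rfl).2.1 (sub_pos.2 (hN N le_rfl).1), ?_⟩
  filter_upwards [eventually_ge_atTop N] with n hn
  calc a N * (1 - T N) ≤ a n * (1 - T n) :=
        Nat.le_induction le_rfl (fun k hk ih => ih.trans (mono k hk)) n hn
    _ ≤ a n := mul_le_of_le_one_right (hN n hn).2.1.le (by linarith [T_nonneg n])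

end AlmostLE

/-! ### Alternating first-order systems -/

section FirstOrderSystem

open scoped InnerProductSpace

variable {E : Type*} [NormedAddCommGroup E] [InnerProductSpace ℝ E]

/-- The energy whose growth along a first-order system is controlled: a weighted sum of squares
plus a cross term, which is dominated by the squares as soon as `1 ≤ c * d`. -/
def pairEnergy (c d : ℝ) (x y : E) : ℝ := c * ‖x‖ ^ 2 + d * ‖y‖ ^ 2 + ⟪x, y⟫_ℝ

lemma abs_inner_le_half {c d : ℝ} (hc : 0 < c) (hcd : 1 ≤ c * d) (x y : E) :
    |⟪x, y⟫_ℝ| ≤ (c * ‖x‖ ^ 2 + d * ‖y‖ ^ 2) / 2 := by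
  refine (abs_real_inner_le_norm x y).trans (le_of_mul_le_mul_left ?_ hc)
  nlinarith [sq_nonneg (c * ‖x‖ - ‖y‖), mul_le_mul_of_nonneg_right hcd (sq_nonneg ‖y‖)]

lemma half_le_pairEnergy {c d : ℝ} (hc : 0 < c) (hcd : 1 ≤ c * d) (x y : E) :
    (c * ‖x‖ ^ 2 + d * ‖y‖ ^ 2) / 2 ≤ pairEnergy c d x y := by
  rw [pairEnergy]
  linarith [neg_le_of_abs_le (abs_inner_le_half hc hcd x y)]

lemma pairEnergy_le {c d : ℝ} (hc : 0 < c) (hcd : 1 ≤ c * d) (x y : E) :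
    pairEnergy c d x y ≤ 3 / 2 * (c * ‖x‖ ^ 2 + d * ‖y‖ ^ 2) := by
  rw [pairEnergy]
  linarith [le_of_abs_le (abs_inner_le_half hc hcd x y)]

lemma pairEnergy_nonneg {c d : ℝ} (hc : 0 < c) (hcd : 1 ≤ c * d) (x y : E) :
    0 ≤ pairEnergy c d x y := by
  have hd : 0 < d := pos_of_mul_pos_right (one_pos.trans_le hcd) hc.le
  exact (by positivity : 0 ≤ (c * ‖x‖ ^ 2 + d * ‖y‖ ^ 2) / 2).trans (half_le_pairEnergy hc hcd x y)

lemma pairEnergy_eq_zero {c d : ℝ} (hc : 0 < c) (hcd : 1 ≤ c * d) {x y : E} :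
    pairEnergy c d x y = 0 ↔ x = 0 ∧ y = 0 := by
  have hd : 0 < d := pos_of_mul_pos_right (one_pos.trans_le hcd) hc.le
  refine ⟨fun h => ?_, fun ⟨hx, hy⟩ => by simp [pairEnergy, hx, hy]⟩
  have hx : 0 ≤ c * ‖x‖ ^ 2 := by positivity
  have hy : 0 ≤ d * ‖y‖ ^ 2 := by positivity
  have hle := half_le_pairEnergy hc hcd x y
  have hx0 : c * ‖x‖ ^ 2 = 0 := by linarith
  have hy0 : d * ‖y‖ ^ 2 = 0 := by linarith
  simpa [hc.ne', hd.ne'] using And.intro hx0 hy0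

lemma pairEnergy_comm (c d : ℝ) (x y : E) : pairEnergy c d x y = pairEnergy d c y x := by
  rw [pairEnergy, pairEnergy, real_inner_comm]
  ring

lemma pairEnergy_step {c : ℝ} (hc : c ≠ 0) (d d' : ℝ) (x y : E) :
    pairEnergy c d' (x + c⁻¹ • y) (-y) = pairEnergy c d x y + (d' - d) * ‖y‖ ^ 2 := by
  simp only [pairEnergy, norm_add_sq_real, norm_neg, inner_neg_right, inner_add_left,
    real_inner_smul_left, real_inner_smul_right, real_inner_self_eq_norm_sq, norm_smul, mul_pow,
    Real.norm_eq_abs, sq_abs]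
  field

lemma AlmostLE.pairEnergy_step {c d d' : ℕ → ℝ} (hc : ∀ n, 0 < c n)
    (hcd : ∀ᶠ n in atTop, 1 ≤ c n * d n) (h : AlmostLE d d') (x y : ℕ → E) :
    AlmostLE (fun n => pairEnergy (c n) (d n) (x n) (y n))
      (fun n => pairEnergy (c n) (d' n) (x n + (c n)⁻¹ • y n) (-y n)) := by
  obtain ⟨η, hη, hη0, hdd'⟩ := h
  refine ⟨fun n => 2 * η n, hη.mul_left 2, fun n => mul_nonneg two_pos.le (hη0 n), ?_⟩
  filter_upwards [hcd, hdd'] with n hcd hdd'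
  have hle := half_le_pairEnergy (hc n) hcd (x n) (y n)
  have hx : 0 ≤ c n * ‖x n‖ ^ 2 := mul_nonneg (hc n).le (sq_nonneg _)
  have hloss : η n * (d n * ‖y n‖ ^ 2) ≤ η n * (2 * pairEnergy (c n) (d n) (x n) (y n)) :=
    mul_le_mul_of_nonneg_left (by linarith) (hη0 n)
  rw [_root_.pairEnergy_step (hc n).ne' (d n)]
  nlinarith [mul_le_mul_of_nonneg_right hdd' (sq_nonneg ‖y n‖)]

/-- The first-order system satisfied by a solution `u` of a second-order difference equation and
its flux `f`: the two are updated alternately, with coefficients `1 / c` and `-1 / d`. -/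
structure IsFirstOrderSystem (c d : ℕ → ℝ) (u f : ℕ → E) : Prop where
  next_fst : ∀ n, u (n + 1) = u n + (c n)⁻¹ • f n
  next_snd : ∀ n, f (n + 1) = f n - (d (n + 1))⁻¹ • u (n + 1)

namespace IsFirstOrderSystem

variable {c d : ℕ → ℝ} {u f : ℕ → E}

/-- The two half steps are instances of the same estimate, with `u` and `f` exchanged. -/
lemma almostLE_pairEnergy (hS : IsFirstOrderSystem c d u f) (hc : ∀ n, 0 < c n)
    (hd : ∀ n, 0 < d n) (hcd : ∀ᶠ n in atTop, 1 ≤ c n * d n)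
    (hcd' : ∀ᶠ n in atTop, 1 ≤ c n * d (n + 1)) (c_le : AlmostLE c fun n => c (n + 1))
    (d_le : AlmostLE d fun n => d (n + 1)) :
    AlmostLE (fun n => pairEnergy (c n) (d n) (u n) (f n))
      (fun n => pairEnergy (c (n + 1)) (d (n + 1)) (u (n + 1)) (f (n + 1))) := by
  have step_u := AlmostLE.pairEnergy_step hc hcd d_le u f
  have step_f := AlmostLE.pairEnergy_step (fun n => hd (n + 1))
    (hcd'.mono fun n hn => hn.trans_eq (mul_comm _ _)) c_le f (fun n => -u (n + 1))
  simp only [← hS.next_fst] at step_u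
  simp only [smul_neg, ← sub_eq_add_neg, ← hS.next_snd, neg_neg] at step_f
  have middle n : pairEnergy (d (n + 1)) (c n) (f n) (-u (n + 1)) =
      pairEnergy (c n) (d (n + 1)) (u (n + 1)) (-f n) := by
    simp only [pairEnergy, norm_neg, inner_neg_right, real_inner_comm]
    ring
  simp only [middle, pairEnergy_comm (d _) (c _) (f _)] at step_f
  exact step_u.trans step_f (hcd.mono fun n hn => pairEnergy_nonneg (hc n) hn _ _)

lemma eq_zero_of_exists (hS : IsFirstOrderSystem c d u f) (h : ∃ n, u n = 0 ∧ f n = 0) :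
    ∀ n, u n = 0 ∧ f n = 0 := by
  have succ_iff n : (u (n + 1) = 0 ∧ f (n + 1) = 0) ↔ (u n = 0 ∧ f n = 0) := by
    constructor
    · rintro ⟨hu, hf⟩
      have hf' : f n = 0 := by simpa [hu, hf] using (hS.next_snd n).symm
      exact ⟨by simpa [hu, hf'] using (hS.next_fst n).symm, hf'⟩
    · rintro ⟨hu, hf⟩
      have hu' : u (n + 1) = 0 := by simp [hS.next_fst, hu, hf]
      exact ⟨hu', by simp [hS.next_snd, hu', hf]⟩
  have iff_zero n : (u n = 0 ∧ f n = 0) ↔ (u 0 = 0 ∧ f 0 = 0) := by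
    induction n with
    | zero => rfl
    | succ n ih => rw [succ_iff, ih]
  obtain ⟨k, hk⟩ := h
  exact fun n => (iff_zero n).2 ((iff_zero k).1 hk)

/-- Otherwise the energy stays above some `δ > 0`, and the summable sequence
`‖u‖² / d + ‖f‖² / c` dominates a multiple of `1 / (c * d)`. -/
theorem eq_zero_of_summable (hS : IsFirstOrderSystem c d u f) (hc : ∀ n, 0 < c n)
    (hd : ∀ n, 0 < d n) (hcd : ∀ᶠ n in atTop, 1 ≤ c n * d n)
    (hcd' : ∀ᶠ n in atTop, 1 ≤ c n * d (n + 1)) (c_le : AlmostLE c fun n => c (n + 1))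
    (d_le : AlmostLE d fun n => d (n + 1)) (hdiv : ¬ Summable fun n => 1 / (c n * d n))
    (hu : Summable fun n => (d n)⁻¹ * ‖u n‖ ^ 2) (hf : Summable fun n => (c n)⁻¹ * ‖f n‖ ^ 2) :
    ∀ n, u n = 0 ∧ f n = 0 := by
  refine hS.eq_zero_of_exists ?_
  by_contra! hne
  have energy_pos : ∀ᶠ n in atTop, 0 < pairEnergy (c n) (d n) (u n) (f n) :=
    hcd.mono fun n hn => (pairEnergy_nonneg (hc n) hn _ _).lt_of_ne' fun h0 =>
      have hzero := (pairEnergy_eq_zero (hc n) hn).1 h0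
      hne n hzero.1 hzero.2
  obtain ⟨δ, hδ, hle⟩ :=
    (hS.almostLE_pairEnergy hc hd hcd hcd' c_le d_le).exists_pos_le energy_pos
  refine hdiv (summable_of_eventually_le_const_mul (C := 3 / (2 * δ)) (hu.add hf)
    (fun n => (one_div_pos.2 (mul_pos (hc n) (hd n))).le) ?_)
  filter_upwards [hle, hcd] with n hle hcd
  have hc := hc n
  have hd := hd n
  calc 1 / (c n * d n) ≤ (3 / 2 * (c n * ‖u n‖ ^ 2 + d n * ‖f n‖ ^ 2)) / δ / (c n * d n) := by
        gcongr
        rw [one_le_div hδ]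
        exact hle.trans (pairEnergy_le hc hcd _ _)
    _ = 3 / (2 * δ) * ((d n)⁻¹ * ‖u n‖ ^ 2 + (c n)⁻¹ * ‖f n‖ ^ 2) := by
        field

end IsFirstOrderSystem

end FirstOrderSystem

/-! ### Weighted `ℓ²` spaces -/

lemma ofReal_mul_star_mul_self (r : ℝ) (z : ℂ) :
    (r : ℂ) * star z * z = ((r * ‖z‖ ^ 2 : ℝ) : ℂ) := by
  rw [mul_assoc, Complex.star_def, Complex.conj_mul']
  push_cast
  rfl

section WeightedL2

variable {w : ℕ → ℝ} {x y : ℕ → ℂ}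

lemma MemL2w.of_eq_zero_of_lt {N : ℕ} (h : ∀ n, N < n → x n = 0) : MemL2w w x :=
  summable_of_ne_finset_zero (s := Finset.range (N + 1)) fun n hn => by
    simp [h n (by simpa using hn)]

lemma MemL2w.const_mul (hx : MemL2w w x) (a : ℂ) : MemL2w w fun n => a * x n :=
  (Summable.mul_left (‖a‖ ^ 2) hx).congr fun n => by rw [norm_mul]; ring

lemma MemL2w.add (hw : ∀ n, 0 ≤ w n) (hx : MemL2w w x) (hy : MemL2w w y) :
    MemL2w w fun n => x n + y n := by
  refine .of_nonneg_of_le (fun n => mul_nonneg (hw n) (sq_nonneg _)) (fun n => ?_)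
    ((Summable.add hx hy).mul_left 2)
  rw [← mul_add, mul_left_comm]
  refine mul_le_mul_of_nonneg_left ?_ (hw n)
  calc ‖x n + y n‖ ^ 2 ≤ (‖x n‖ + ‖y n‖) ^ 2 := by gcongr; exact norm_add_le _ _
    _ ≤ 2 * (‖x n‖ ^ 2 + ‖y n‖ ^ 2) := add_sq_le

lemma not_memL2w_of_le_norm (hw : ∀ n, 0 ≤ w n) (hdiv : ¬ Summable w) {r : ℝ} (hr : 0 < r)
    (h : ∀ᶠ n in atTop, r ≤ ‖x n‖) : ¬ MemL2w w x := fun hx => by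
  refine hdiv (summable_of_eventually_le_const_mul (C := 1 / r ^ 2) hx hw ?_)
  filter_upwards [h] with n hn
  rw [one_div_mul_eq_div, le_div_iff₀ (by positivity)]
  exact mul_le_mul_of_nonneg_left (by gcongr) (hw n)

lemma eq_zero_of_memL2w_const (hw : ∀ n, 0 ≤ w n) (hdiv : ¬ Summable w) {a : ℂ}
    (h : MemL2w w fun _ => a) : a = 0 := by
  by_contra ha
  exact not_memL2w_of_le_norm hw hdiv (norm_pos_iff.2 ha) (.of_forall fun _ => le_rfl) h

lemma summable_sqrt_mul_norm_mul_norm {v : ℕ → ℝ} (hw : ∀ n, 0 ≤ w n) (hv : ∀ n, 0 ≤ v n)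
    (hx : MemL2w w x) (hy : MemL2w v y) : Summable fun n => √(w n * v n) * (‖x n‖ * ‖y n‖) := by
  refine .of_nonneg_of_le (fun n => by positivity) (fun n => ?_) (Summable.add hx hy)
  rw [Real.sqrt_mul (hw n)]
  nlinarith [sq_nonneg (√(w n) * ‖x n‖ - √(v n) * ‖y n‖), Real.sq_sqrt (hw n),
    Real.sq_sqrt (hv n), mul_nonneg (mul_nonneg (Real.sqrt_nonneg (w n)) (Real.sqrt_nonneg (v n)))
    (mul_nonneg (norm_nonneg (x n)) (norm_nonneg (y n)))]

lemma MemL2w.summable_innerW (hw : ∀ n, 0 ≤ w n) (hx : MemL2w w x) (hy : MemL2w w y) :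
    Summable fun n => (w n : ℂ) * star (x n) * y n := by
  refine .of_norm ((summable_sqrt_mul_norm_mul_norm hw hw hx hy).congr fun n => ?_)
  rw [norm_mul, norm_mul, norm_star, Complex.norm_real, Real.norm_of_nonneg (hw n),
    Real.sqrt_mul_self (hw n), mul_assoc]

lemma MemL2w.tendsto_sum_innerW (hw : ∀ n, 0 ≤ w n) (hx : MemL2w w x) (hy : MemL2w w y) :
    Tendsto (fun N => ∑ n ∈ Finset.range N, (w n : ℂ) * star (x n) * y n) atTop
      (𝓝 (innerW w x y)) :=
  (hx.summable_innerW hw hy).hasSum.tendsto_sum_nat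

/-- A Carleman-type criterion: the divergence of `∑ √(w * v)` prevents `star x * y` from having a
nonzero limit. -/
lemma eq_zero_of_tendsto_star_mul {v : ℕ → ℝ} (hw : ∀ n, 0 ≤ w n) (hv : ∀ n, 0 ≤ v n)
    (hdiv : ¬ Summable fun n => √(w n * v n)) (hx : MemL2w w x) (hy : MemL2w v y) {W : ℂ}
    (h : Tendsto (fun n => star (x n) * y n) atTop (𝓝 W)) : W = 0 := by
  by_contra hW
  have hW : 0 < ‖W‖ := norm_pos_iff.2 hW
  refine hdiv (summable_of_eventually_le_const_mul (C := 2 / ‖W‖)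
    (summable_sqrt_mul_norm_mul_norm hw hv hx hy) (fun n => Real.sqrt_nonneg _) ?_)
  filter_upwards [h.norm.eventually_const_le (half_lt_self hW)] with n hn
  rw [norm_mul, norm_star] at hn
  rw [div_mul_eq_mul_div, le_div_iff₀ hW]
  nlinarith [Real.sqrt_nonneg (w n * v n)]

lemma star_innerW (w : ℕ → ℝ) (x y : ℕ → ℂ) : star (innerW w x y) = innerW w y x := by
  rw [innerW, innerW, Complex.star_def, Complex.conj_tsum]
  refine tsum_congr fun n => ?_
  simp only [map_mul, Complex.conj_ofReal, Complex.conj_conj]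
  ring

lemma innerW_const_mul (w : ℕ → ℝ) (x y : ℕ → ℂ) (a : ℂ) :
    innerW w x (fun n => a * y n) = a * innerW w x y := by
  rw [innerW, innerW, ← tsum_mul_left]
  exact tsum_congr fun n => by ring

lemma innerW_self (w : ℕ → ℝ) (x : ℕ → ℂ) :
    innerW w x x = ((∑' n, w n * ‖x n‖ ^ 2 : ℝ) : ℂ) := by
  rw [innerW, Complex.ofReal_tsum]
  exact tsum_congr fun n => ofReal_mul_star_mul_self _ _

lemma innerW_single_left (w : ℕ → ℝ) (k : ℕ) (y : ℕ → ℂ) :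
    innerW w (Pi.single k 1) y = w k * y k := by
  rw [innerW, tsum_eq_single k fun n hn => by simp [Pi.single_eq_of_ne hn]]
  simp

lemma MemL2w.eq_zero_of_tsum_eq_zero (hw : ∀ n, 0 < w n) (hx : MemL2w w x)
    (h : ∑' n, w n * ‖x n‖ ^ 2 = 0) : x = 0 := by
  have hzero := (hasSum_zero_iff_of_nonneg fun n => mul_nonneg (hw n).le (sq_nonneg _)).1
    (h ▸ Summable.hasSum hx)
  funext n
  simpa [(hw n).ne'] using congrFun hzero n

lemma norm_sum_innerW_sq_le (hw : ∀ n, 0 ≤ w n) (x y : ℕ → ℂ) (s : Finset ℕ) :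
    ‖∑ n ∈ s, (w n : ℂ) * star (x n) * y n‖ ^ 2 ≤
      (∑ n ∈ s, w n * ‖x n‖ ^ 2) * ∑ n ∈ s, w n * ‖y n‖ ^ 2 := by
  calc ‖∑ n ∈ s, (w n : ℂ) * star (x n) * y n‖ ^ 2
      ≤ (∑ n ∈ s, ‖(w n : ℂ) * star (x n) * y n‖) ^ 2 := by gcongr; exact norm_sum_le _ _
    _ ≤ (∑ n ∈ s, w n * ‖x n‖ ^ 2) * ∑ n ∈ s, w n * ‖y n‖ ^ 2 := by
      refine Finset.sum_sq_le_sum_mul_sum_of_sq_le_mul s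
        (fun n _ => mul_nonneg (hw n) (sq_nonneg _)) (fun n _ => mul_nonneg (hw n) (sq_nonneg _))
        fun n _ => ?_
      rw [norm_mul, norm_mul, norm_star, Complex.norm_real, Real.norm_of_nonneg (hw n)]
      exact (by ring : _ = _).le

end WeightedL2

/-! ### The flux and summation by parts -/

/-- The positivity of the birth rates `l n` and of the death rates `m (n + 1)`; nothing is asked
of the killing rate `m 0`. -/
structure PosRates (l m : ℕ → ℝ) : Prop where
  birth_pos : ∀ n, 0 < l n
  death_pos : ∀ n, 0 < m (n + 1)

/-- The conductance `πₙ λₙ` of the edge between `n` and `n + 1`, which makes the process a random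
walk on a weighted half-line. -/
def conductance (l m : ℕ → ℝ) (n : ℕ) : ℝ := bdPi l m n * l n

/-- The resistance of the edge between `n` and `n + 1`, which is the weight of the `ℓ²` space of
fluxes of finite energy. -/
def resistance (l m : ℕ → ℝ) (n : ℕ) : ℝ := (conductance l m n)⁻¹

/-- The flux of `x` through the edge between `n` and `n + 1`; its discrete divergence is
`π * Q x`, up to the killing term at `0`. -/
def flux (l m : ℕ → ℝ) (x : ℕ → ℂ) (n : ℕ) : ℂ := conductance l m n * (x (n + 1) - x n)

section BirthDeath

variable {l m : ℕ → ℝ} {x y : ℕ → ℂ}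

namespace PosRates

lemma bdPi_pos (h : PosRates l m) (n : ℕ) : 0 < bdPi l m n := by
  induction n with
  | zero => exact one_pos
  | succ n ih => exact mul_pos ih (div_pos (h.birth_pos n) (h.death_pos n))

lemma conductance_pos (h : PosRates l m) (n : ℕ) : 0 < conductance l m n :=
  mul_pos (h.bdPi_pos n) (h.birth_pos n)

lemma resistance_pos (h : PosRates l m) (n : ℕ) : 0 < resistance l m n :=
  inv_pos.2 (h.conductance_pos n)

lemma bdPi_succ_mul_death (h : PosRates l m) (n : ℕ) :
    bdPi l m (n + 1) * m (n + 1) = conductance l m n := by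
  rw [bdPi, conductance, mul_assoc, div_mul_cancel₀ _ (h.death_pos n).ne']

lemma bdPi_mul_resistance (h : PosRates l m) (n : ℕ) :
    bdPi l m n * resistance l m n = 1 / l n := by
  rw [resistance, conductance, mul_inv, mul_inv_cancel_left₀ (h.bdPi_pos n).ne', one_div]

lemma succ_eq_add_flux (h : PosRates l m) (x : ℕ → ℂ) (n : ℕ) :
    x (n + 1) = x n + resistance l m n • flux l m x n := by
  have hc : (conductance l m n : ℂ) ≠ 0 := Complex.ofReal_ne_zero.2 (h.conductance_pos n).ne'
  rw [flux, resistance, Complex.real_smul, Complex.ofReal_inv, inv_mul_cancel_left₀ hc,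
    add_sub_cancel]

end PosRates

lemma bdPi_mul_bdAct_zero (l m : ℕ → ℝ) (x : ℕ → ℂ) :
    (bdPi l m 0 : ℂ) * bdAct l m x 0 = flux l m x 0 - m 0 * x 0 := by
  simp only [bdPi, bdAct, flux, conductance]
  push_cast
  ring

lemma PosRates.bdPi_mul_bdAct_succ (h : PosRates l m) (x : ℕ → ℂ) (n : ℕ) :
    (bdPi l m (n + 1) : ℂ) * bdAct l m x (n + 1) = flux l m x (n + 1) - flux l m x n := by
  rw [flux, flux, ← h.bdPi_succ_mul_death n, conductance, bdAct]
  push_cast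
  ring

lemma PosRates.sum_star_mul_bdAct (h : PosRates l m) (x y : ℕ → ℂ) (N : ℕ) :
    ∑ n ∈ Finset.range (N + 1), (bdPi l m n : ℂ) * star (x n) * bdAct l m y n =
      star (x N) * flux l m y N
        - ∑ n ∈ Finset.range N, (resistance l m n : ℂ) * star (flux l m x n) * flux l m y n
        - m 0 * star (x 0) * y 0 := by
  induction N with
  | zero =>
    rw [zero_add, Finset.sum_range_one, Finset.sum_range_zero]
    linear_combination star (x 0) * bdPi_mul_bdAct_zero l m y
  | succ N ih =>
    have star_succ : star (x (N + 1)) =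
        star (x N) + (resistance l m N : ℂ) * star (flux l m x N) := by
      rw [h.succ_eq_add_flux x N, star_add, star_smul, star_trivial (resistance l m N),
        Complex.real_smul]
    rw [Finset.sum_range_succ, ih, Finset.sum_range_succ _ N]
    linear_combination star (x (N + 1)) * h.bdPi_mul_bdAct_succ y N - flux l m y N * star_succ

lemma PosRates.re_star_mul_flux (h : PosRates l m) (x : ℕ → ℂ) (N : ℕ) :
    (star (x N) * flux l m x N).re =
      (∑ n ∈ Finset.range (N + 1), (bdPi l m n : ℂ) * star (x n) * bdAct l m x n).re
        + m 0 * ‖x 0‖ ^ 2 + ∑ n ∈ Finset.range N, resistance l m n * ‖flux l m x n‖ ^ 2 := by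
  rw [h.sum_star_mul_bdAct x x N]
  simp only [ofReal_mul_star_mul_self, ← Complex.ofReal_sum, Complex.sub_re, Complex.ofReal_re]
  ring

/-! ### Finite energy and self-adjointness -/

open scoped InnerProductSpace in
lemma norm_le_norm_add_of_inner_nonneg {E : Type*} [NormedAddCommGroup E] [InnerProductSpace ℝ E]
    {u v : E} (h : 0 ≤ ⟪u, v⟫_ℝ) : ‖u‖ ≤ ‖u + v‖ := by
  refine (sq_le_sq₀ (norm_nonneg _) (norm_nonneg _)).1 ?_
  rw [norm_add_sq_real]
  linarith [sq_nonneg ‖v‖]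

namespace PosRates

lemma norm_le_norm_succ (h : PosRates l m) {n : ℕ}
    (hn : 0 ≤ (star (x n) * flux l m x n).re) : ‖x n‖ ≤ ‖x (n + 1)‖ := by
  rw [h.succ_eq_add_flux x n]
  refine norm_le_norm_add_of_inner_nonneg ?_
  rw [real_inner_smul_right, Complex.inner, mul_comm (flux l m x n)]
  exact mul_nonneg (h.resistance_pos n).le hn

/-- If the energy were infinite, then `Re (star x * flux x) → ∞` by summation by parts, so `‖x‖`
would be eventually nondecreasing, which is impossible in `ℓ²(π)` when `∑ π = ∞`. -/
lemma memL2w_flux (h : PosRates l m) (hπ : ¬ Summable (bdPi l m))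
    (hx : x ∈ DomW (bdPi l m) (bdAct l m)) : MemL2w (resistance l m) (flux l m x) := by
  by_contra henergy
  have energy_tendsto := (not_summable_iff_tendsto_nat_atTop_of_nonneg fun n =>
    mul_nonneg (h.resistance_pos n).le (sq_nonneg _)).1 henergy
  have form_tendsto := (Complex.continuous_re.tendsto _).comp
    ((tendsto_add_atTop_iff_nat 1).2 (hx.1.tendsto_sum_innerW (fun n => (h.bdPi_pos n).le) hx.2))
  have boundary_tendsto : Tendsto (fun N => (star (x N) * flux l m x N).re) atTop atTop := by
    simp only [h.re_star_mul_flux x]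
    exact (form_tendsto.add_const _).add_atTop energy_tendsto
  obtain ⟨M, hM⟩ := eventually_atTop.1 (boundary_tendsto.eventually_gt_atTop 0)
  have norm_pos : 0 < ‖x M‖ := norm_pos_iff.2 fun h0 => by simpa [h0] using hM M le_rfl
  refine not_memL2w_of_le_norm (fun n => (h.bdPi_pos n).le) hπ norm_pos ?_ hx.1
  filter_upwards [eventually_ge_atTop M] with n hn
  exact Nat.le_induction le_rfl (fun k hk ih => ih.trans (h.norm_le_norm_succ (hM k hk).le)) n hn

lemma innerW_bdAct (h : PosRates l m) (hπ : ¬ Summable (bdPi l m))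
    (hC : ¬ Summable fun n => √(1 / l n)) (hx : x ∈ DomW (bdPi l m) (bdAct l m))
    (hy : y ∈ DomW (bdPi l m) (bdAct l m)) :
    innerW (bdPi l m) x (bdAct l m y) =
      -innerW (resistance l m) (flux l m x) (flux l m y) - m 0 * star (x 0) * y 0 := by
  have hw n := (h.bdPi_pos n).le
  have hr n := (h.resistance_pos n).le
  have boundary_tendsto : Tendsto (fun N => star (x N) * flux l m y N) atTop
      (𝓝 (innerW (bdPi l m) x (bdAct l m y)
        + innerW (resistance l m) (flux l m x) (flux l m y) + m 0 * star (x 0) * y 0)) := by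
    refine Tendsto.congr (fun N => ?_)
      ((((tendsto_add_atTop_iff_nat 1).2 (hx.1.tendsto_sum_innerW hw hy.2)).add
        ((h.memL2w_flux hπ hx).tendsto_sum_innerW hr (h.memL2w_flux hπ hy))).add_const
        (m 0 * star (x 0) * y 0))
    rw [h.sum_star_mul_bdAct x y N]
    ring
  simp only [← h.bdPi_mul_resistance] at hC
  linear_combination
    eq_zero_of_tendsto_star_mul hw hr hC hx.1 (h.memL2w_flux hπ hy) boundary_tendsto

lemma innerW_bdAct_comm (h : PosRates l m) (hπ : ¬ Summable (bdPi l m))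
    (hC : ¬ Summable fun n => √(1 / l n)) (hx : x ∈ DomW (bdPi l m) (bdAct l m))
    (hy : y ∈ DomW (bdPi l m) (bdAct l m)) :
    innerW (bdPi l m) (bdAct l m x) y = innerW (bdPi l m) x (bdAct l m y) := by
  rw [← star_innerW, h.innerW_bdAct hπ hC hy hx, h.innerW_bdAct hπ hC hx hy, star_sub, star_neg,
    star_innerW]
  simp only [star_mul', Complex.star_def, Complex.conj_ofReal, Complex.conj_conj]
  ring

end PosRates

lemma bdAct_eq_zero_of_lt {N n : ℕ} (hx : ∀ k, N < k → x k = 0) (hn : N + 1 < n) :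
    bdAct l m x n = 0 := by
  obtain ⟨k, rfl⟩ := Nat.exists_eq_add_of_le' (show 1 ≤ n by omega)
  rw [bdAct, hx k (by omega), hx (k + 1) (by omega), hx (k + 2) (by omega)]
  simp only [mul_zero, add_zero]

lemma single_mem_domW_bdAct (l m : ℕ → ℝ) (k : ℕ) :
    (Pi.single k 1 : ℕ → ℂ) ∈ DomW (bdPi l m) (bdAct l m) := by
  have hk n (hn : k < n) : (Pi.single k 1 : ℕ → ℂ) n = 0 := Pi.single_eq_of_ne hn.ne' _
  exact ⟨.of_eq_zero_of_lt hk, .of_eq_zero_of_lt fun n hn => bdAct_eq_zero_of_lt hk hn⟩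

namespace PosRates

lemma innerW_bdAct_comm_of_finite_support (h : PosRates l m) {N : ℕ}
    (hx : ∀ n, N < n → x n = 0) (y : ℕ → ℂ) :
    innerW (bdPi l m) (bdAct l m x) y = innerW (bdPi l m) x (bdAct l m y) := by
  have flux_zero : flux l m x (N + 1) = 0 := by
    rw [flux, hx (N + 1) (by omega), hx (N + 1 + 1) (by omega), sub_zero, mul_zero]
  have lhs : innerW (bdPi l m) y (bdAct l m x) =
      ∑ n ∈ Finset.range (N + 1 + 1), (bdPi l m n : ℂ) * star (y n) * bdAct l m x n :=
    tsum_eq_sum fun n hn => by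
      have hn : N + 1 + 1 ≤ n := by simpa using hn
      rw [bdAct_eq_zero_of_lt hx hn, mul_zero]
  have rhs : innerW (bdPi l m) x (bdAct l m y) =
      ∑ n ∈ Finset.range (N + 1 + 1), (bdPi l m n : ℂ) * star (x n) * bdAct l m y n :=
    tsum_eq_sum fun n hn => by
      have hn : N + 1 + 1 ≤ n := by simpa using hn
      rw [hx n (by omega), star_zero, mul_zero, zero_mul]
  rw [← star_innerW, lhs, rhs, h.sum_star_mul_bdAct, h.sum_star_mul_bdAct, flux_zero,
    hx (N + 1) (by omega)]
  simp only [mul_zero, star_zero, zero_mul, zero_sub, star_sub, star_neg, star_sum, star_mul',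
    Complex.star_def, Complex.conj_ofReal, Complex.conj_conj, mul_right_comm]

lemma isSelfAdjointW_bdAct (h : PosRates l m) (hπ : ¬ Summable (bdPi l m))
    (hC : ¬ Summable fun n => √(1 / l n)) : IsSelfAdjointW (bdPi l m) (bdAct l m) := by
  refine fun y z hy hz => ⟨fun hyz => ?_, ?_⟩
  · have act_eq : bdAct l m y = z := by
      funext k
      have hk := hyz _ (single_mem_domW_bdAct l m k)
      rw [h.innerW_bdAct_comm_of_finite_support (N := k) fun n hn => Pi.single_eq_of_ne hn.ne' _,
        innerW_single_left, innerW_single_left] at hk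
      exact mul_left_cancel₀ (Complex.ofReal_ne_zero.2 (h.bdPi_pos k).ne') hk
    exact ⟨⟨hy, act_eq ▸ hz⟩, act_eq⟩
  · rintro ⟨hy', rfl⟩ x hx
    exact h.innerW_bdAct_comm hπ hC hx hy'

/-! ### Solutions of `Q x = -s x` away from `0` -/

lemma almostLE_conductance_succ (h : PosRates l m)
    (hml : AlmostLE (fun n => m (n + 1)) fun n => l (n + 1)) :
    AlmostLE (conductance l m) fun n => conductance l m (n + 1) := by
  have hle := hml.mul_left fun n => (h.bdPi_pos (n + 1)).le
  simp only [h.bdPi_succ_mul_death] at hle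
  exact hle

lemma almostLE_inv_bdPi_succ (h : PosRates l m) (hlm : AlmostLE l fun n => m (n + 1)) :
    AlmostLE (fun n => (bdPi l m n)⁻¹) fun n => (bdPi l m (n + 1))⁻¹ := by
  have resistance_mul_birth n : resistance l m n * l n = (bdPi l m n)⁻¹ := by
    rw [resistance, conductance, mul_inv, inv_mul_cancel_right₀ (h.birth_pos n).ne']
  have resistance_mul_death n : resistance l m n * m (n + 1) = (bdPi l m (n + 1))⁻¹ := by
    rw [resistance, ← h.bdPi_succ_mul_death, mul_inv, inv_mul_cancel_right₀ (h.death_pos n).ne']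
  simpa only [resistance_mul_birth, resistance_mul_death] using
    hlm.mul_left fun n => (h.resistance_pos n).le

lemma not_summable_bdPi (h : PosRates l m)
    (hml : AlmostLE (fun n => m (n + 1)) fun n => l (n + 1))
    (hdiv : ¬ Summable fun n => 1 / l n) : ¬ Summable (bdPi l m) := fun hs => by
  obtain ⟨δ, hδ, hle⟩ :=
    (h.almostLE_conductance_succ hml).exists_pos_le (.of_forall h.conductance_pos)
  refine hdiv (summable_of_eventually_le_const_mul (C := 1 / δ) hs
    (fun n => (one_div_pos.2 (h.birth_pos n)).le) ?_)
  filter_upwards [hle] with n hn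
  rwa [one_div_mul_eq_div, div_le_div_iff₀ (h.birth_pos n) hδ, one_mul]

lemma not_summable_resistance (h : PosRates l m) (hlm : AlmostLE l fun n => m (n + 1))
    (hdiv : ¬ Summable fun n => 1 / l n) : ¬ Summable (resistance l m) := fun hs => by
  obtain ⟨δ, hδ, hle⟩ := (h.almostLE_inv_bdPi_succ hlm).exists_pos_le
    (.of_forall fun n => inv_pos.2 (h.bdPi_pos n))
  refine hdiv (summable_of_eventually_le_const_mul (C := 1 / δ) hs
    (fun n => (one_div_pos.2 (h.birth_pos n)).le) ?_)
  filter_upwards [hle] with n hn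
  rw [← h.bdPi_mul_resistance]
  refine mul_le_mul_of_nonneg_right ?_ (h.resistance_pos n).le
  rwa [one_div, le_inv_comm₀ (h.bdPi_pos n) hδ]

lemma flux_succ_of_tail (h : PosRates l m) {s : ℝ}
    (hQ : ∀ n, bdAct l m x (n + 1) = -s * x (n + 1)) (n : ℕ) :
    flux l m x (n + 1) = flux l m x n - (s * bdPi l m (n + 1)) • x (n + 1) := by
  have hact := h.bdPi_mul_bdAct_succ x n
  rw [hQ] at hact
  rw [Complex.real_smul]
  push_cast
  linear_combination -hact

lemma eq_zero_of_tail_zero (h : PosRates l m) (hπ : ¬ Summable (bdPi l m))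
    (hr : ¬ Summable (resistance l m)) (hx : x ∈ DomW (bdPi l m) (bdAct l m))
    (hQ : ∀ n, bdAct l m x (n + 1) = 0) : x = 0 := by
  have flux_const n : flux l m x n = flux l m x 0 := by
    induction n with
    | zero => rfl
    | succ n ih =>
      rw [h.flux_succ_of_tail (s := 0) (by simpa using hQ), zero_mul, zero_smul, sub_zero, ih]
  have flux_zero : flux l m x 0 = 0 :=
    eq_zero_of_memL2w_const (fun n => (h.resistance_pos n).le) hr
      (funext flux_const ▸ h.memL2w_flux hπ hx)
  have x_const n : x n = x 0 := by
    induction n with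
    | zero => rfl
    | succ n ih => rw [h.succ_eq_add_flux x n, flux_const, flux_zero, smul_zero, add_zero, ih]
  have x_zero : x 0 = 0 :=
    eq_zero_of_memL2w_const (fun n => (h.bdPi_pos n).le) hπ (funext x_const ▸ hx.1)
  exact funext fun n => (x_const n).trans x_zero

lemma eq_zero_of_tail_pos (h : PosRates l m) (hl : Tendsto l atTop atTop)
    (hdiv : ¬ Summable fun n => 1 / l n) (hlm : AlmostLE l fun n => m (n + 1))
    (hml : AlmostLE (fun n => m (n + 1)) fun n => l (n + 1)) {s : ℝ} (hs : 0 < s)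
    (hx : x ∈ DomW (bdPi l m) (bdAct l m)) (hQ : ∀ n, bdAct l m x (n + 1) = -s * x (n + 1)) :
    x = 0 := by
  set d : ℕ → ℝ := fun n => (s * bdPi l m n)⁻¹ with hd
  have system : IsFirstOrderSystem (conductance l m) d x (flux l m x) :=
    ⟨h.succ_eq_add_flux x, fun n => by rw [h.flux_succ_of_tail hQ, hd, inv_inv]⟩
  have mul_d n : conductance l m n * d n = l n / s := by
    have := (h.bdPi_pos n).ne'
    rw [hd, conductance]
    field
  have mul_d_succ n : conductance l m n * d (n + 1) = m (n + 1) / s := by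
    have := (h.bdPi_pos (n + 1)).ne'
    rw [hd, ← h.bdPi_succ_mul_death]
    field
  have one_le_div {r : ℕ → ℝ} (hr : Tendsto r atTop atTop) : ∀ᶠ n in atTop, 1 ≤ r n / s :=
    (hr.atTop_div_const hs).eventually_ge_atTop 1
  have d_le : AlmostLE d fun n => d (n + 1) := by
    simpa only [hd, mul_inv] using
      (h.almostLE_inv_bdPi_succ hlm).mul_left (w := fun _ => s⁻¹) fun _ => (inv_pos.2 hs).le
  refine funext fun n => (system.eq_zero_of_summable h.conductance_pos
    (fun n => inv_pos.2 (mul_pos hs (h.bdPi_pos n))) ?_ ?_ (h.almostLE_conductance_succ hml) d_le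
    ?_ ?_ (h.memL2w_flux (h.not_summable_bdPi hml hdiv) hx) n).1
  · simpa only [mul_d] using one_le_div hl
  · simpa only [mul_d_succ] using one_le_div (hlm.tendsto_atTop hl)
  · simp only [mul_d, one_div_div, div_eq_mul_one_div s]
    rwa [summable_mul_left_iff hs.ne']
  · simpa only [hd, inv_inv, mul_assoc] using Summable.mul_left s hx.1

lemma eq_zero_of_tail (h : PosRates l m) (hl : Tendsto l atTop atTop)
    (hdiv : ¬ Summable fun n => 1 / l n) (hlm : AlmostLE l fun n => m (n + 1))
    (hml : AlmostLE (fun n => m (n + 1)) fun n => l (n + 1)) {s : ℝ} (hs : 0 ≤ s)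
    (hx : x ∈ DomW (bdPi l m) (bdAct l m)) (hQ : ∀ n, bdAct l m x (n + 1) = -s * x (n + 1)) :
    x = 0 := by
  rcases hs.eq_or_lt with rfl | hs
  · exact h.eq_zero_of_tail_zero (h.not_summable_bdPi hml hdiv)
      (h.not_summable_resistance hlm hdiv) hx (by simpa using hQ)
  · exact h.eq_zero_of_tail_pos hl hdiv hlm hml hs hx hQ

lemma not_exists_bdAct_sub_eq_single (h : PosRates l m) (hl : Tendsto l atTop atTop)
    (hdiv : ¬ Summable fun n => 1 / l n) (hlm : AlmostLE l fun n => m (n + 1))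
    (hml : AlmostLE (fun n => m (n + 1)) fun n => l (n + 1)) {r : ℝ} (hr : r ≤ 0) :
    ¬ ∃ x ∈ DomW (bdPi l m) (bdAct l m), (fun n => bdAct l m x n - r * x n) = Pi.single 0 1 := by
  rintro ⟨x, hx, hQ⟩
  have x_zero : x = 0 := by
    refine h.eq_zero_of_tail hl hdiv hlm hml (neg_nonneg.2 hr) hx fun n => ?_
    have hn : bdAct l m x (n + 1) - r * x (n + 1) = 0 :=
      (congrFun hQ (n + 1)).trans (Pi.single_eq_of_ne n.succ_ne_zero _)
    rw [sub_eq_zero.1 hn, Complex.ofReal_neg, neg_neg]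
  simpa [x_zero, bdAct] using congrFun hQ 0

end PosRates

/-! ### The resolvent set -/

lemma notMem_slitPlane_iff_exists_ofReal {z : ℂ} :
    z ∉ Complex.slitPlane ↔ ∃ r : ℝ, r ≤ 0 ∧ z = r := by
  rw [Complex.mem_slitPlane_iff, not_or, not_lt, not_ne_iff]
  constructor
  · exact fun ⟨hre, him⟩ => ⟨z.re, hre, Complex.ext rfl him⟩
  · rintro ⟨r, hr, rfl⟩
    exact ⟨hr, Complex.ofReal_im r⟩

lemma exists_mul_le_norm_ofReal_add_mul {z : ℂ} (hz : z ∈ Complex.slitPlane) :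
    ∃ d > 0, ∀ e X : ℝ, 0 ≤ e → 0 ≤ X → d * X ≤ ‖(e : ℂ) + z * X‖ := by
  rcases Complex.mem_slitPlane_iff.1 hz with hre | him
  · refine ⟨z.re, hre, fun e X he _ => ?_⟩
    have hle := Complex.re_le_norm ((e : ℂ) + z * X)
    rw [Complex.add_re, Complex.ofReal_re, Complex.re_mul_ofReal] at hle
    linarith
  · refine ⟨|z.im|, abs_pos.2 him, fun e X _ hX => ?_⟩
    have hle := Complex.abs_im_le_norm ((e : ℂ) + z * X)
    rwa [Complex.add_im, Complex.ofReal_im, zero_add, Complex.im_mul_ofReal, abs_mul,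
      abs_of_nonneg hX] at hle

namespace PosRates

lemma eq_zero_of_mem_slitPlane (h : PosRates l m) (hm0 : 0 ≤ m 0) (hπ : ¬ Summable (bdPi l m))
    (hC : ¬ Summable fun n => √(1 / l n)) {z : ℂ} (hz : z ∈ Complex.slitPlane)
    (hx : x ∈ DomW (bdPi l m) (bdAct l m)) (hQ : bdAct l m x = fun n => z * x n) : x = 0 := by
  have hform := h.innerW_bdAct hπ hC hx hx
  rw [hQ, innerW_const_mul, innerW_self, innerW_self, ofReal_mul_star_mul_self] at hform
  set X := ∑' n, bdPi l m n * ‖x n‖ ^ 2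
  set energy := ∑' n, resistance l m n * ‖flux l m x n‖ ^ 2
  have X_nonneg : 0 ≤ X := tsum_nonneg fun n => mul_nonneg (h.bdPi_pos n).le (sq_nonneg _)
  have energy_nonneg : 0 ≤ energy :=
    tsum_nonneg fun n => mul_nonneg (h.resistance_pos n).le (sq_nonneg _)
  obtain ⟨d, hd, hle⟩ := exists_mul_le_norm_ofReal_add_mul hz
  have hdX := hle (energy + m 0 * ‖x 0‖ ^ 2) X (by positivity) X_nonneg
  rw [hform, Complex.ofReal_add, sub_eq_add_neg, ← neg_add, add_neg_cancel, norm_zero] at hdX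
  exact hx.1.eq_zero_of_tsum_eq_zero h.bdPi_pos
    (le_antisymm (nonpos_of_mul_nonpos_right hdX hd) X_nonneg)

lemma sum_star_mul_of_dirichlet (h : PosRates l m) {z : ℂ}
    (hxy : ∀ n, bdAct l m x n - z * x n = y n) {K : ℕ} (hK : x (K + 1) = 0) :
    ∑ n ∈ Finset.range (K + 1), (bdPi l m n : ℂ) * star (x n) * y n =
      -(((conductance l m K * ‖x K‖ ^ 2 + ∑ n ∈ Finset.range K, resistance l m n *
          ‖flux l m x n‖ ^ 2 + m 0 * ‖x 0‖ ^ 2 : ℝ) : ℂ)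
        + z * (∑ n ∈ Finset.range (K + 1), bdPi l m n * ‖x n‖ ^ 2 : ℝ)) := by
  have boundary : star (x K) * flux l m x K = -((conductance l m K * ‖x K‖ ^ 2 : ℝ) : ℂ) := by
    rw [← ofReal_mul_star_mul_self, flux, hK]
    ring
  have term n : (bdPi l m n : ℂ) * star (x n) * y n =
      (bdPi l m n : ℂ) * star (x n) * bdAct l m x n
        - z * ((bdPi l m n * ‖x n‖ ^ 2 : ℝ) : ℂ) := by
    rw [← ofReal_mul_star_mul_self, ← hxy n]
    ring
  simp only [term, Finset.sum_sub_distrib, ← Finset.mul_sum, h.sum_star_mul_bdAct, boundary,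
    ofReal_mul_star_mul_self, ← Complex.ofReal_sum]
  push_cast
  ring

lemma exists_dirichlet_bound (h : PosRates l m) (hm0 : 0 ≤ m 0) {z : ℂ}
    (hz : z ∈ Complex.slitPlane) :
    ∃ C ≥ 0, ∀ x y : ℕ → ℂ, (∀ n, bdAct l m x n - z * x n = y n) → ∀ K, x (K + 1) = 0 →
      ∑ n ∈ Finset.range (K + 1), bdPi l m n * ‖x n‖ ^ 2 ≤
        C * ∑ n ∈ Finset.range (K + 1), bdPi l m n * ‖y n‖ ^ 2 := by
  obtain ⟨d, hd, hle⟩ := exists_mul_le_norm_ofReal_add_mul hz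
  refine ⟨(d ^ 2)⁻¹, by positivity, fun x y hxy K hK => ?_⟩
  have hw n := (h.bdPi_pos n).le
  set X := ∑ n ∈ Finset.range (K + 1), bdPi l m n * ‖x n‖ ^ 2
  set Y := ∑ n ∈ Finset.range (K + 1), bdPi l m n * ‖y n‖ ^ 2
  have X_nonneg : 0 ≤ X := Finset.sum_nonneg fun n _ => mul_nonneg (hw n) (sq_nonneg _)
  have Y_nonneg : 0 ≤ Y := Finset.sum_nonneg fun n _ => mul_nonneg (hw n) (sq_nonneg _)
  have energy_nonneg : 0 ≤ ∑ n ∈ Finset.range K, resistance l m n * ‖flux l m x n‖ ^ 2 :=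
    Finset.sum_nonneg fun n _ => mul_nonneg (h.resistance_pos n).le (sq_nonneg _)
  have hcond := h.conductance_pos K
  have lower : d * X ≤ ‖∑ n ∈ Finset.range (K + 1), (bdPi l m n : ℂ) * star (x n) * y n‖ := by
    rw [h.sum_star_mul_of_dirichlet hxy hK, norm_neg]
    exact hle _ _ (by positivity) X_nonneg
  have square : (d * X) ^ 2 ≤ X * Y :=
    (pow_le_pow_left₀ (by positivity) lower 2).trans (norm_sum_innerW_sq_le hw x y _)
  rw [inv_mul_eq_div, le_div_iff₀ (by positivity)]
  rcases X_nonneg.eq_or_lt with hX | hX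
  · rwa [← hX, zero_mul]
  · exact le_of_mul_le_mul_left (by linarith) hX

end PosRates

/-- The solution `x` of the recurrence `(Q - z) x = y` with initial value `x 0 = α`. -/
def sol (l m : ℕ → ℝ) (z : ℂ) (y : ℕ → ℂ) (α : ℂ) : ℕ → ℂ
  | 0 => α
  | 1 => (y 0 + (z + (l 0 + m 0)) * α) / l 0
  | n + 2 => (y (n + 1) + (z + (l (n + 1) + m (n + 1))) * sol l m z y α (n + 1)
      - m (n + 1) * sol l m z y α n) / l (n + 1)

lemma bdAct_sol_sub (hl : ∀ n, l n ≠ 0) (z : ℂ) (y : ℕ → ℂ) (α : ℂ) (n : ℕ) :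
    bdAct l m (sol l m z y α) n - z * sol l m z y α n = y n := by
  have hln : (l n : ℂ) ≠ 0 := Complex.ofReal_ne_zero.2 (hl n)
  rcases n with _ | n
  all_goals
    simp only [bdAct, sol, Complex.ofReal_neg, Complex.ofReal_add]
    rw [mul_div_cancel₀ _ hln]
    ring

lemma sol_eq_add_mul (z : ℂ) (y : ℕ → ℂ) (α : ℂ) (n : ℕ) :
    sol l m z y α n = sol l m z y 0 n + α * sol l m z 0 1 n := by
  induction n using Nat.twoStepInduction with
  | zero => simp only [sol, zero_add, mul_one]
  | one => simp only [sol, Pi.zero_apply]; ring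
  | more n ih ih' => rw [sol, sol, sol, ih, ih', Pi.zero_apply]; ring

lemma continuous_sol (z : ℂ) (y : ℕ → ℂ) (n : ℕ) : Continuous fun α => sol l m z y α n := by
  refine Continuous.congr ?_ fun α => (sol_eq_add_mul z y α n).symm
  fun_prop

namespace PosRates

/-- A Dirichlet solution of the homogeneous equation would vanish, but `sol l m z 0 1 0 = 1`. -/
lemma sol_succ_ne_zero (h : PosRates l m) (hm0 : 0 ≤ m 0) {z : ℂ} (hz : z ∈ Complex.slitPlane)
    (K : ℕ) : sol l m z 0 1 (K + 1) ≠ 0 := fun hK => by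
  obtain ⟨C, -, hC⟩ := h.exists_dirichlet_bound hm0 hz
  have hle := hC _ 0 (bdAct_sol_sub (fun n => (h.birth_pos n).ne') z 0 1) K hK
  have hpos : 0 < ∑ n ∈ Finset.range (K + 1), bdPi l m n * ‖sol l m z 0 1 n‖ ^ 2 :=
    Finset.sum_pos' (fun n _ => mul_nonneg (h.bdPi_pos n).le (sq_nonneg _))
      ⟨0, by simp, by simp [sol, bdPi]⟩
  simp only [Pi.zero_apply, norm_zero, ne_eq, OfNat.ofNat_ne_zero, not_false_eq_true, zero_pow,
    mul_zero, Finset.sum_const_zero] at hle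
  exact hpos.not_ge hle

/-- The initial values whose solution obeys the Dirichlet bound up to `K` form a decreasing
sequence of nonempty compact sets. -/
lemma exists_memL2w_sol (h : PosRates l m) (hm0 : 0 ≤ m 0) {z : ℂ} (hz : z ∈ Complex.slitPlane)
    (hy : MemL2w (bdPi l m) y) : ∃ α, MemL2w (bdPi l m) (sol l m z y α) := by
  obtain ⟨C, hC0, hC⟩ := h.exists_dirichlet_bound hm0 hz
  have term_nonneg (x : ℕ → ℂ) n : 0 ≤ bdPi l m n * ‖x n‖ ^ 2 :=
    mul_nonneg (h.bdPi_pos n).le (sq_nonneg _)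
  set B := C * ∑' n, bdPi l m n * ‖y n‖ ^ 2
  set S : ℕ → Set ℂ := fun K =>
    {α | ∑ n ∈ Finset.range (K + 1), bdPi l m n * ‖sol l m z y α n‖ ^ 2 ≤ B} with hS
  have S_succ K : S (K + 1) ⊆ S K := fun α hα => by
    rw [hS, Set.mem_ofPred_eq, Finset.sum_range_succ _ (K + 1)] at hα
    exact (le_add_of_nonneg_right (term_nonneg _ _)).trans hα
  have S_nonempty K : (S K).Nonempty := by
    have hne := h.sol_succ_ne_zero hm0 hz K
    refine ⟨-sol l m z y 0 (K + 1) / sol l m z 0 1 (K + 1),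
      (hC _ y (bdAct_sol_sub (fun n => (h.birth_pos n).ne') z y _) K ?_).trans
        (mul_le_mul_of_nonneg_left (hy.sum_le_tsum _ fun n _ => term_nonneg y n) hC0)⟩
    rw [sol_eq_add_mul, div_mul_cancel₀ _ hne, add_neg_cancel]
  have S_closed K : IsClosed (S K) :=
    isClosed_le (continuous_finsetSum _ fun n _ =>
      ((continuous_sol z y n).norm.pow 2).const_mul _) continuous_const
  have S_compact : IsCompact (S 0) := by
    refine (isCompact_closedBall (0 : ℂ) √B).of_isClosed_subset (S_closed 0) fun α hα => ?_
    have hα : ‖α‖ ^ 2 ≤ B := by simpa [hS, sol, bdPi] using hα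
    exact mem_closedBall_zero_iff.2 (Real.le_sqrt_of_sq_le hα)
  obtain ⟨α, hα⟩ := IsCompact.nonempty_iInter_of_sequence_nonempty_isCompact_isClosed S S_succ
    S_nonempty S_compact S_closed
  refine ⟨α, summable_of_sum_range_le (c := B) (term_nonneg _) fun K => ?_⟩
  have hK := Set.mem_iInter.1 hα K
  rw [hS, Set.mem_ofPred_eq, Finset.sum_range_succ] at hK
  exact (le_add_of_nonneg_right (term_nonneg _ _)).trans hK

lemma exists_bdAct_sub_eq (h : PosRates l m) (hm0 : 0 ≤ m 0) {z : ℂ}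
    (hz : z ∈ Complex.slitPlane) (hy : MemL2w (bdPi l m) y) :
    ∃ x ∈ DomW (bdPi l m) (bdAct l m), (fun n => bdAct l m x n - z * x n) = y := by
  obtain ⟨α, hα⟩ := h.exists_memL2w_sol hm0 hz hy
  have hsol := bdAct_sol_sub (m := m) (fun n => (h.birth_pos n).ne') z y α
  have act_eq : bdAct l m (sol l m z y α) = fun n => y n + z * sol l m z y α n :=
    funext fun n => eq_add_of_sub_eq (hsol n)
  refine ⟨_, ⟨hα, ?_⟩, funext hsol⟩
  rw [act_eq]
  exact hy.add (fun n => (h.bdPi_pos n).le) (hα.const_mul z)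

end PosRates

/-! ### The interlaced sequence -/

lemma interlace_even (l m : ℕ → ℝ) (n : ℕ) : interlace l m (2 * n) = m (n + 1) := by
  simp [interlace]

lemma interlace_odd (l m : ℕ → ℝ) (n : ℕ) : interlace l m (2 * n + 1) = l (n + 1) := by
  rw [interlace, if_neg (by omega), show (2 * n + 1) / 2 = n by omega]

lemma PosRates.interlace_pos (h : PosRates l m) (n : ℕ) : 0 < interlace l m n := by
  rw [interlace]
  split
  exacts [h.death_pos _, h.birth_pos _]

lemma almostLE_death_birth (h : AlmostLE (interlace l m) fun n => interlace l m (n + 1)) :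
    AlmostLE (fun n => m (n + 1)) fun n => l (n + 1) := by
  simpa only [interlace_even, interlace_odd] using
    h.comp_injective (φ := fun n => 2 * n) fun a b hab => by lia

lemma almostLE_birth_death (h : AlmostLE (interlace l m) fun n => interlace l m (n + 1)) :
    AlmostLE l fun n => m (n + 1) := by
  refine AlmostLE.of_succ ?_
  simpa only [interlace_odd, add_assoc, ← mul_add_one, interlace_even] using
    h.comp_injective (φ := fun n => 2 * n + 1) fun a b hab => by lia

lemma tendsto_birth_of_interlace (h : Tendsto (interlace l m) atTop atTop) :
    Tendsto l atTop atTop := by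
  have hodd : Function.Injective fun n : ℕ => 2 * n + 1 := fun a b hab => by lia
  refine (tendsto_add_atTop_iff_nat 1).1 ?_
  simpa only [Function.comp_def, interlace_odd] using h.comp hodd.nat_tendsto_atTop

lemma PosRates.not_summable_inv_birth (h : PosRates l m) (hlm : AlmostLE l fun n => m (n + 1))
    (hdiv : ¬ Summable fun n => 1 / interlace l m n) : ¬ Summable fun n => 1 / l n := fun hs => by
  have summable_even : Summable fun n => 1 / interlace l m (2 * n) := by
    simpa only [interlace_even] using hlm.summable_inv h.birth_pos h.death_pos hs
  have summable_odd : Summable fun n => 1 / interlace l m (2 * n + 1) := by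
    simpa only [interlace_odd] using (summable_nat_add_iff (f := fun n => 1 / l n) 1).2 hs
  exact hdiv (HasSum.even_add_odd (f := fun n => 1 / interlace l m n) summable_even.hasSum
    summable_odd.hasSum).summable

end BirthDeath

lemma not_summable_sqrt {a : ℕ → ℝ} (ha : ∀ n, 0 ≤ a n) (hlim : Tendsto a atTop (𝓝 0))
    (hdiv : ¬ Summable a) : ¬ Summable fun n => √(a n) := fun hs => by
  refine hdiv (summable_of_eventually_le_const_mul (C := 1) hs ha ?_)
  filter_upwards [hlim.eventually_le_const one_pos] with n hn
  rw [one_mul]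
  exact Real.le_sqrt_of_sq_le (pow_le_of_le_one (ha n) hn two_ne_zero)

/-- Theorem on birth and death processes: under (a)–(c) for the interlaced sequence,
the generator `Q` is self-adjoint on `ℓ²(π)`, has no eigenvalues, and its spectrum
is `(-∞, 0]`. -/
theorem bd_generator_selfAdjoint_spectrum
    (l m : ℕ → ℝ) (hl : ∀ n, 0 < l n) (hm : ∀ n, 0 < m (n + 1)) (hm0 : 0 ≤ m 0)
    (h1 : Tendsto (interlace l m) atTop atTop)
    (h2 : ¬ Summable fun n : ℕ => 1 / interlace l m n)
    (h3 : Summable fun n : ℕ => max (-(interlace l m (n + 1) / interlace l m n - 1)) 0) :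
    IsSelfAdjointW (bdPi l m) (bdAct l m) ∧
    eigenW (bdPi l m) (bdAct l m) = ∅ ∧
    spectrumW (bdPi l m) (bdAct l m) = {z : ℂ | ∃ r : ℝ, r ≤ 0 ∧ z = (r : ℂ)} := by
  have h : PosRates l m := ⟨hl, hm⟩
  have hle : AlmostLE (interlace l m) fun n => interlace l m (n + 1) :=
    .of_summable_ratio h.interlace_pos h3
  have hlm := almostLE_birth_death hle
  have hml := almostLE_death_birth hle
  have l_tendsto := tendsto_birth_of_interlace h1
  have hdiv := h.not_summable_inv_birth hlm h2
  have hπ := h.not_summable_bdPi hml hdiv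
  have hC : ¬ Summable fun n => √(1 / l n) :=
    not_summable_sqrt (fun n => (one_div_pos.2 (hl n)).le) (l_tendsto.const_div_atTop 1) hdiv
  have injective {z : ℂ} {x : ℕ → ℂ} (hx : x ∈ DomW (bdPi l m) (bdAct l m))
      (hQ : bdAct l m x = fun n => z * x n) : x = 0 := by
    by_cases hz : z ∈ Complex.slitPlane
    · exact h.eq_zero_of_mem_slitPlane hm0 hπ hC hz hx hQ
    · obtain ⟨r, hr, rfl⟩ := notMem_slitPlane_iff_exists_ofReal.1 hz
      exact h.eq_zero_of_tail l_tendsto hdiv hlm hml (neg_nonneg.2 hr) hx fun n => by simp [hQ]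
  refine ⟨h.isSelfAdjointW_bdAct hπ hC,
    Set.eq_empty_of_forall_notMem fun z ⟨x, hx, hne, hQ⟩ => hne (injective hx hQ),
    Set.ext fun z => ⟨fun hz => ?_, ?_⟩⟩
  · exact notMem_slitPlane_iff_exists_ofReal.1 fun hmem =>
      hz ⟨fun x => injective, fun y => h.exists_bdAct_sub_eq hm0 hmem⟩
  · rintro ⟨r, hr, rfl⟩ ⟨-, surjective⟩
    exact h.not_exists_bdAct_sub_eq_single l_tendsto hdiv hlm hml hr
      (surjective _ (single_mem_domW_bdAct l m 0).1)
end
end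

section
/- Let C be a Jacobi matrix with weights {a_n} and diagonal {b_n}. Assume: (a) a_n → ∞; (b) ∑_{n≥0} 1/a_n = ∞; (c) ∑_{n≥0} [ a_{n+1}/a_n − 1 ]⁻ < ∞; (d) lim_{n→∞} (a_{n−1} − b_n + a_n) = M for some M ∈ ℝ. Then σ_ess(C) = [−M, ∞). -/
/-!
Write `(Dx)ₙ = xₙ + xₙ₊₁`. Then `C = D* a D + d`, where the potential `dₙ = bₙ - aₙ₋₁ - aₙ` tends
to `-M`. Carleman's condition `∑ 1 / aₙ = ∞` provides a subsequence along which boundary terms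
vanish, so `C` is self-adjoint and `∑ aₙ |(Dx)ₙ|² + ∑ dₙ |xₙ|² ≤ ⟨x, Cx⟩` on its domain.

For `l < -M` this inequality shows that `C - l` is bounded below modulo a compact term, the
restriction of `x` to finitely many entries; the spectrum of a self-adjoint operator does not
accumulate at such a point.

For `l = -M + δ` with `δ > 0`, there are arbitrarily far out windows, starting at some `m` and of
length `≫ √aₘ`, on which `a` is almost constant. On them the wave packets `(-z)ⁿ φ(n)` with
`aₘ |z - 1|² = δ` almost solve `a D D* w = δ w`. The residual is small only in the weight `1 / a`,
so `D* w` need not be a Weyl sequence for `C`. But if `l` were in the resolvent set, the solution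
`x` of `(C - l) x = D* w` would have energy `∑ aₙ |(Dx)ₙ|²` bounded by a multiple of `‖D* w‖²`, and
pairing the residual with `Dx` would give `‖D* w‖² ≤ c ‖D* w‖²` with `c < 1`.
-/

open Filter Topology

noncomputable section

open scoped lp InnerProductSpace

section UnboundedOperators

variable {𝕜 E F : Type*}

section Closed

variable [RCLike 𝕜] [NormedAddCommGroup E] [NormedSpace 𝕜 E]

/-- The operator `T - l` on the domain of `T`. -/
def subScalar (T : E →ₗ.[𝕜] E) (l : 𝕜) : T.domain →ₗ[𝕜] E :=
  T.toFun - l • T.domain.subtype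

/-- The spectrum of a possibly unbounded operator, in the algebraic sense: the `l` for which `T - l`
is not a bijection from the domain onto the space. For closed `T` on a Banach space the inverse is
then automatically bounded. -/
def unboundedSpectrum (T : E →ₗ.[𝕜] E) : Set 𝕜 :=
  {l | ¬ Function.Bijective (subScalar T l)}

/-- `l` is a point of regular type of `T`: the operator `T - l` is bounded below. -/
def IsRegularPoint (T : E →ₗ.[𝕜] E) (l : 𝕜) : Prop :=
  ∃ K : ℝ, ∀ x : T.domain, ‖(x : E)‖ ≤ K * ‖subScalar T l x‖

variable {T : E →ₗ.[𝕜] E} {l : 𝕜}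

lemma subScalar_apply (x : T.domain) : subScalar T l x = T x - l • (x : E) := rfl

/-- The operator `T - l` read on the graph of `T`, where it is bounded. -/
def graphSubScalar (T : E →ₗ.[𝕜] E) (l : 𝕜) : T.graph →L[𝕜] E :=
  (ContinuousLinearMap.snd 𝕜 E E - l • ContinuousLinearMap.fst 𝕜 E E) ∘L T.graph.subtypeL

lemma graphSubScalar_mk (x : T.domain) :
    graphSubScalar T l ⟨(x, T x), T.mem_graph x⟩ = subScalar T l x := rfl

lemma exists_eq_mk_of_graph (p : T.graph) : ∃ x : T.domain, p = ⟨(x, T x), T.mem_graph x⟩ := by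
  obtain ⟨x, hx, hTx⟩ := T.mem_graph_iff.1 p.2
  exact ⟨x, Subtype.ext (Prod.ext hx.symm hTx.symm)⟩

lemma range_graphSubScalar :
    Set.range (graphSubScalar T l) = Set.range (subScalar T l) := by
  ext y
  constructor
  · rintro ⟨p, rfl⟩
    obtain ⟨x, rfl⟩ := exists_eq_mk_of_graph p
    exact ⟨x, rfl⟩
  · rintro ⟨x, rfl⟩
    exact ⟨_, graphSubScalar_mk x⟩

variable [CompleteSpace E]

lemma isRegularPoint_of_notMem_unboundedSpectrum (hT : T.IsClosed)
    (hl : l ∉ unboundedSpectrum T) : IsRegularPoint T l := by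
  have hbij : Function.Bijective (subScalar T l) := not_not.1 hl
  have : CompleteSpace T.graph := _root_.IsClosed.isComplete hT |>.completeSpace_coe
  have hsurj : Function.Surjective (graphSubScalar T l) := by
    rw [← Set.range_eq_univ, range_graphSubScalar, hbij.2.range_eq]
  obtain ⟨K, -, hK⟩ := (graphSubScalar T l).exists_preimage_norm_le hsurj
  refine ⟨K, fun x => ?_⟩
  obtain ⟨p, hpx, hp⟩ := hK (subScalar T l x)
  obtain ⟨x', rfl⟩ := exists_eq_mk_of_graph p
  obtain rfl : x' = x := hbij.1 hpx
  exact (norm_fst_le (x'.1, T x')).trans hp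

lemma IsRegularPoint.isClosed_range (hT : T.IsClosed) (hl : IsRegularPoint T l) :
    IsClosed (Set.range (subScalar T l)) := by
  obtain ⟨K, hK⟩ := hl
  have : CompleteSpace T.graph := _root_.IsClosed.isComplete hT |>.completeSpace_coe
  have hbound : ∀ p, ‖p‖ ≤ (max K (1 + ‖l‖ * K)).toNNReal * ‖graphSubScalar T l p‖ := by
    intro p
    obtain ⟨x, rfl⟩ := exists_eq_mk_of_graph p
    rw [graphSubScalar_mk]
    have hTx : ‖T x‖ ≤ (1 + ‖l‖ * K) * ‖subScalar T l x‖ :=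
      calc ‖T x‖ = ‖subScalar T l x + l • (x : E)‖ := by rw [subScalar_apply, sub_add_cancel]
        _ ≤ ‖subScalar T l x‖ + ‖l‖ * ‖(x : E)‖ := by grw [norm_add_le, norm_smul]
        _ ≤ (1 + ‖l‖ * K) * ‖subScalar T l x‖ := by grw [hK x]; apply le_of_eq; ring
    have hmax : max K (1 + ‖l‖ * K) ≤ (max K (1 + ‖l‖ * K)).toNNReal := Real.le_coe_toNNReal _
    refine max_le ((hK x).trans ?_) (hTx.trans ?_) <;>
      exact mul_le_mul_of_nonneg_right (le_trans (by simp) hmax) (norm_nonneg _)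
  rw [← range_graphSubScalar]
  exact ((graphSubScalar T l).antilipschitz_of_bound hbound).isClosed_range
    (graphSubScalar T l).uniformContinuous

end Closed

section SelfAdjoint

variable [RCLike 𝕜] [NormedAddCommGroup E] [InnerProductSpace 𝕜 E]
  {T : E →ₗ.[𝕜] E} {l : 𝕜}

lemma re_inner_subScalar_ofReal (l : ℝ) (x : T.domain) :
    RCLike.re ⟪(x : E), subScalar T (l : 𝕜) x⟫_𝕜
      = RCLike.re ⟪(x : E), T x⟫_𝕜 - l * ‖(x : E)‖ ^ 2 := by
  rw [subScalar_apply, inner_sub_right, inner_smul_right, map_sub, RCLike.re_ofReal_mul,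
    inner_self_eq_norm_sq]

variable [CompleteSpace E]

open scoped ComplexConjugate

lemma inner_map_left_eq_right (hT : IsSelfAdjoint T) (x y : T.domain) :
    ⟪T x, (y : E)⟫_𝕜 = ⟪(x : E), T y⟫_𝕜 := by
  have h := LinearPMap.adjoint_isFormalAdjoint hT.dense_domain
  rw [LinearPMap.isSelfAdjoint_def.1 hT] at h
  exact h x y

lemma exists_adjoint_eigenvector_of_orthogonal_range (hT : IsSelfAdjoint T) {y : E}
    (hy : ∀ x, ⟪y, subScalar T l x⟫_𝕜 = 0) : ∃ x : T.domain, (x : E) = y ∧ T x = conj l • y := by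
  have hadj : ∀ x : T.domain, ⟪conj l • y, (x : E)⟫_𝕜 = ⟪y, T x⟫_𝕜 := fun x => by
    have := hy x
    rw [subScalar_apply, inner_sub_right, inner_smul_right, sub_eq_zero] at this
    rw [inner_smul_left, RCLike.conj_conj, this]
  have hdom : y ∈ T.adjoint.domain := T.mem_adjoint_domain_of_exists y ⟨_, hadj⟩
  have hmap := LinearPMap.adjoint_apply_eq hT.dense_domain ⟨y, hdom⟩ hadj
  rw [← LinearPMap.isSelfAdjoint_def.1 hT]
  exact ⟨⟨y, hdom⟩, rfl, hmap⟩

lemma conj_eq_of_eigenvector (hT : IsSelfAdjoint T) {x : T.domain} (hx : x ≠ 0)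
    (hTx : T x = l • (x : E)) : conj l = l := by
  have h := inner_map_left_eq_right hT x x
  rw [hTx, inner_smul_left, inner_smul_right] at h
  exact mul_right_cancel₀ (inner_self_ne_zero.2 fun h0 => hx (Subtype.ext h0)) h

lemma notMem_unboundedSpectrum_iff (hT : IsSelfAdjoint T) :
    l ∉ unboundedSpectrum T ↔ IsRegularPoint T l := by
  refine ⟨isRegularPoint_of_notMem_unboundedSpectrum hT.isClosed, fun hl => ?_⟩
  have hinj : Function.Injective (subScalar T l) := by
    obtain ⟨K, hK⟩ := hl
    refine (injective_iff_map_eq_zero _).2 fun x hx => Subtype.ext (norm_le_zero_iff.1 ?_)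
    simpa [hx] using hK x
  have hclosed : IsClosed ((subScalar T l).range : Set E) := by
    simpa only [LinearMap.coe_range] using hl.isClosed_range hT.isClosed
  have : CompleteSpace (subScalar T l).range := hclosed.completeSpace_coe
  refine not_not.2 ⟨hinj, LinearMap.range_eq_top.1 (Submodule.orthogonal_eq_bot_iff.1 ?_)⟩
  refine (Submodule.eq_bot_iff _).2 fun y hy => ?_
  obtain ⟨x, rfl, hTx⟩ := exists_adjoint_eigenvector_of_orthogonal_range hT
    fun x => (Submodule.mem_orthogonal' _ _).1 hy _ ⟨x, rfl⟩
  by_contra hx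
  have hx0 : x ≠ 0 := fun h => hx (by rw [h, ZeroMemClass.coe_zero])
  have hreal := conj_eq_of_eigenvector hT hx0 hTx
  rw [RCLike.conj_conj] at hreal
  exact hx0 (hinj (by rw [map_zero, subScalar_apply, hTx, ← hreal, sub_self]))

lemma im_eq_zero_of_mem_unboundedSpectrum (hT : IsSelfAdjoint T) (hl : l ∈ unboundedSpectrum T) :
    RCLike.im l = 0 := by
  contrapose! hl
  refine (notMem_unboundedSpectrum_iff hT).2 ⟨|RCLike.im l|⁻¹, fun x => ?_⟩
  have him : RCLike.im ⟪(x : E), subScalar T l x⟫_𝕜 = -(RCLike.im l * ‖(x : E)‖ ^ 2) := by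
    have hTx : RCLike.im ⟪(x : E), T x⟫_𝕜 = 0 :=
      RCLike.conj_eq_iff_im.1 (by rw [inner_conj_symm, inner_map_left_eq_right hT])
    rw [subScalar_apply, inner_sub_right, inner_smul_right, inner_self_eq_norm_sq_to_K, map_sub,
      hTx, ← RCLike.ofReal_pow, mul_comm, RCLike.im_ofReal_mul]
    ring
  have hle : |RCLike.im l| * ‖(x : E)‖ ^ 2 ≤ ‖(x : E)‖ * ‖subScalar T l x‖ := by
    have := (RCLike.abs_im_le_norm _).trans (norm_inner_le_norm (𝕜 := 𝕜) (x : E) (subScalar T l x))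
    rwa [him, abs_neg, abs_mul, abs_of_nonneg (sq_nonneg ‖(x : E)‖)] at this
  rw [inv_mul_eq_div, le_div_iff₀ (abs_pos.2 hl)]
  rcases (norm_nonneg (x : E)).eq_or_lt with h0 | hpos
  · rw [← h0, zero_mul]
    exact norm_nonneg _
  · exact le_of_mul_le_mul_left (by linarith) hpos

section ModuloCompact

variable [NormedAddCommGroup F] [NormedSpace 𝕜 F]

/-- `T - l` is bounded below modulo `P`. For compact `P` this says that `T - l` has closed range and
finite-dimensional kernel. -/
def IsRegularPointMod (P : E →L[𝕜] F) (T : E →ₗ.[𝕜] E) (l : 𝕜) : Prop :=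
  ∃ K : ℝ, ∀ x : T.domain, ‖(x : E)‖ ≤ K * (‖subScalar T l x‖ + ‖P x‖)

variable {P : E →L[𝕜] F}

omit [CompleteSpace E] in
lemma IsRegularPointMod.eventually (hl : IsRegularPointMod P T l) :
    ∀ᶠ s in 𝓝 l, IsRegularPointMod P T s := by
  obtain ⟨K, hK⟩ := hl
  have hcont : Continuous fun s => |K| * ‖s - l‖ := by fun_prop
  filter_upwards [hcont.continuousAt.eventually_lt_const
    (show |K| * ‖l - l‖ < 1 / 2 by norm_num)] with s hs
  refine ⟨2 * |K|, fun x => ?_⟩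
  have hshift : ‖subScalar T l x‖ ≤ ‖subScalar T s x‖ + ‖s - l‖ * ‖(x : E)‖ := by
    rw [← norm_smul, subScalar_apply, subScalar_apply]
    refine le_of_eq_of_le (congrArg norm ?_) (norm_add_le _ _)
    rw [sub_smul, sub_add_sub_cancel]
  have hx : ‖(x : E)‖ ≤ |K| * (‖subScalar T l x‖ + ‖P x‖) :=
    (hK x).trans (mul_le_mul_of_nonneg_right (le_abs_self K) (by positivity))
  have habsorb : |K| * ‖s - l‖ * ‖(x : E)‖ ≤ 1 / 2 * ‖(x : E)‖ := by gcongr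
  linarith [mul_le_mul_of_nonneg_left hshift (abs_nonneg K)]

lemma IsRegularPointMod.exists_subseq_tendsto (hP : IsCompactOperator P)
    (hl : IsRegularPointMod P T l) {x : ℕ → T.domain} (hx : ∀ n, ‖(x n : E)‖ = 1)
    (hTx : Tendsto (fun n => subScalar T l (x n)) atTop (𝓝 0)) :
    ∃ (y : E) (φ : ℕ → ℕ), StrictMono φ ∧ Tendsto (fun n => (x (φ n) : E)) atTop (𝓝 y) := by
  obtain ⟨K, hK⟩ := hl
  obtain ⟨S, hS, hPS⟩ :=
    IsCompactOperator.image_closedBall_subset_compact (f := (P : E →ₗ[𝕜] F)) hP 1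
  obtain ⟨z, -, φ, hφ, hz⟩ := hS.tendsto_subseq fun n =>
    hPS ⟨x n, mem_closedBall_zero_iff.2 (hx n).le, rfl⟩
  have hcauchy : CauchySeq fun n => (x (φ n) : E) := by
    have hTx' := (hTx.comp hφ.tendsto_atTop).cauchySeq
    rw [cauchySeq_iff_tendsto_dist_atTop_0] at hTx' ⊢
    have hPx := cauchySeq_iff_tendsto_dist_atTop_0.1 hz.cauchySeq
    refine squeeze_zero (fun _ => dist_nonneg) (fun p => ?_)
      (by simpa only [add_zero, mul_zero] using (hTx'.add hPx).const_mul K)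
    simpa [dist_eq_norm, map_sub] using hK (x (φ p.1) - x (φ p.2))
  obtain ⟨y, hy⟩ := cauchySeq_tendsto_of_complete hcauchy
  exact ⟨y, φ, hφ, hy⟩

lemma IsRegularPointMod.exists_unit_eigenvector (hT : IsSelfAdjoint T) (hP : IsCompactOperator P)
    (hl : IsRegularPointMod P T l) (hspec : l ∈ unboundedSpectrum T) :
    ∃ x : T.domain, ‖(x : E)‖ = 1 ∧ T x = l • (x : E) := by
  have hweyl : ∀ n : ℕ, ∃ x : T.domain, ‖(x : E)‖ = 1 ∧ ‖subScalar T l x‖ ≤ 1 / ((n : ℝ) + 1) := by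
    intro n
    by_contra! hbound
    refine (notMem_unboundedSpectrum_iff hT).2 ⟨n + 1, fun x => ?_⟩ hspec
    rcases eq_or_ne (x : E) 0 with h0 | h0
    · rw [h0, norm_zero]
      positivity
    have hn := hbound ((‖(x : E)‖⁻¹ : 𝕜) • x) (norm_smul_inv_norm h0)
    rw [map_smul, norm_smul, norm_inv, RCLike.norm_ofReal, abs_norm, inv_mul_eq_div,
      div_lt_div_iff₀ (by positivity) (norm_pos_iff.2 h0), one_mul, mul_comm] at hn
    exact hn.le
  choose x hx hTx using hweyl
  have hlim : Tendsto (fun n => subScalar T l (x n)) atTop (𝓝 0) :=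
    squeeze_zero_norm hTx tendsto_one_div_add_atTop_nhds_zero_nat
  obtain ⟨y, φ, hφ, hy⟩ := hl.exists_subseq_tendsto hP hx hlim
  have hTy : Tendsto (fun n => T (x (φ n))) atTop (𝓝 (l • y)) := by
    simpa [subScalar_apply] using (hlim.comp hφ.tendsto_atTop).add (hy.const_smul l)
  have hgraph : (y, l • y) ∈ T.graph :=
    hT.isClosed.mem_of_tendsto (hy.prodMk_nhds hTy) (.of_forall fun n => T.mem_graph _)
  obtain ⟨u, rfl, hu⟩ := T.mem_graph_iff.1 hgraph
  exact ⟨u, tendsto_nhds_unique hy.norm (by simp [hx]), hu⟩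

theorem IsRegularPointMod.not_accPt_unboundedSpectrum (hT : IsSelfAdjoint T)
    (hP : IsCompactOperator P) (hl : IsRegularPointMod P T l) :
    ¬ AccPt l (𝓟 (unboundedSpectrum T)) := by
  intro hacc
  have hfreq : ∃ᶠ s in 𝓝 l, s ≠ l ∧ ∃ x : T.domain, ‖(x : E)‖ = 1 ∧ T x = s • (x : E) :=
    (accPt_iff_frequently.1 hacc).mp <| hl.eventually.mono fun s hs hmem =>
      ⟨hmem.1, hs.exists_unit_eigenvector hT hP hmem.2⟩
  obtain ⟨s, hsl, hev⟩ := exists_seq_forall_of_frequently hfreq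
  choose hne x hx hTx using hev
  have hlim : Tendsto (fun n => subScalar T l (x n)) atTop (𝓝 0) := by
    refine squeeze_zero_norm (fun n => ?_) (tendsto_iff_norm_sub_tendsto_zero.1 hsl)
    rw [subScalar_apply, hTx, ← sub_smul, norm_smul, hx, mul_one]
  obtain ⟨y, φ, hφ, hy⟩ := hl.exists_subseq_tendsto hP hx hlim
  have horth : ∀ i j, s i ≠ s j → ⟪(x i : E), (x j : E)⟫_𝕜 = 0 := by
    intro i j hij
    have hxi : x i ≠ 0 := fun h => by simpa [h] using hx i
    have h := inner_map_left_eq_right hT (x i) (x j)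
    rw [hTx, hTx, inner_smul_left, inner_smul_right, conj_eq_of_eigenvector hT hxi (hTx i)] at h
    exact (mul_eq_mul_right_iff.1 h).resolve_left hij
  have hyx : ∀ i, ⟪(x i : E), y⟫_𝕜 = 0 := by
    intro i
    have hev : ∀ᶠ n in atTop, ⟪(x i : E), (x (φ n) : E)⟫_𝕜 = 0 :=
      ((hsl.comp hφ.tendsto_atTop).eventually_ne (hne i).symm).mono fun n hn => horth _ _ hn.symm
    exact tendsto_nhds_unique_of_eventuallyEq (tendsto_const_nhds.inner hy) tendsto_const_nhds hev
  have hyy : ⟪y, y⟫_𝕜 = 0 :=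
    tendsto_nhds_unique (hy.inner tendsto_const_nhds) (by simp [hyx])
  have hnorm : ‖y‖ = 1 := tendsto_nhds_unique hy.norm (by simp [hx])
  rw [inner_self_eq_zero.1 hyy, norm_zero] at hnorm
  exact zero_ne_one hnorm

end ModuloCompact

end SelfAdjoint

end UnboundedOperators

section Summation

/-- The edge operator `(Dx)ₙ = xₙ + xₙ₊₁`. -/
def edgeSum {R : Type*} [Add R] (x : ℕ → R) (n : ℕ) : R := x n + x (n + 1)

/-- The formal transpose of `edgeSum`: `(D*w)₀ = w₀` and `(D*w)ₙ = wₙ₋₁ + wₙ`. -/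
def vertexSum {R : Type*} [Add R] (w : ℕ → R) : ℕ → R
  | 0 => w 0
  | n + 1 => w n + w (n + 1)

lemma sum_vertexSum_mul {R : Type*} [NonUnitalNonAssocSemiring R] (w v : ℕ → R) (N : ℕ) :
    ∑ n ∈ Finset.range (N + 1), vertexSum w n * v n
      = ∑ n ∈ Finset.range N, w n * edgeSum v n + w N * v N := by
  induction N with
  | zero => simp [vertexSum]
  | succ N ih =>
    rw [Finset.sum_range_succ, ih, Finset.sum_range_succ, add_assoc, add_assoc]
    simp only [vertexSum, edgeSum, add_mul, mul_add, add_assoc]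

/-- Carleman's condition makes boundary terms negligible along a subsequence. -/
lemma frequently_mul_lt_of_summable {a f : ℕ → ℝ} (ha : ∀ n, 0 < a n)
    (hdiv : ¬ Summable fun n => 1 / a n) (hf : Summable f) {c : ℝ} (hc : 0 < c) :
    ∃ᶠ n in atTop, a n * f n < c := by
  intro hle
  refine hdiv ((hf.mul_left c⁻¹).of_norm_bounded_eventually_nat ?_)
  filter_upwards [hle] with n hn
  have hfn : c / a n ≤ f n := (div_le_iff₀' (ha n)).2 (not_lt.1 hn)
  rw [Real.norm_of_nonneg (one_div_nonneg.2 (ha n).le), ← div_eq_inv_mul, le_div_iff₀ hc]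
  calc 1 / a n * c = c / a n := by ring
    _ ≤ f n := hfn

lemma norm_sum_mul_le_sqrt_mul_sqrt {ι R : Type*} [SeminormedRing R] {a : ι → ℝ}
    (ha : ∀ i, 0 < a i) (r s : ι → R) (t : Finset ι) :
    ‖∑ i ∈ t, r i * s i‖ ≤ √(∑ i ∈ t, ‖r i‖ ^ 2 / a i) * √(∑ i ∈ t, a i * ‖s i‖ ^ 2) := by
  have hr : ∀ i ∈ t, 0 ≤ ‖r i‖ ^ 2 / a i := fun i _ => div_nonneg (sq_nonneg _) (ha i).le
  rw [← Real.sqrt_mul (Finset.sum_nonneg hr)]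
  refine (norm_sum_le _ _).trans (Real.le_sqrt_of_sq_le ?_)
  refine Finset.sum_sq_le_sum_mul_sum_of_sq_le_mul _ hr
    (fun i _ => mul_nonneg (ha i).le (sq_nonneg _)) fun i _ => ?_
  calc ‖r i * s i‖ ^ 2 ≤ (‖r i‖ * ‖s i‖) ^ 2 := by gcongr; exact norm_mul_le _ _
    _ = ‖r i‖ ^ 2 / a i * (a i * ‖s i‖ ^ 2) := by
      have := (ha i).ne'
      field_simp

end Summation

section SquareSummable

lemma memℓp_two_iff {ι : Type*} {E : ι → Type*} [∀ i, NormedAddCommGroup (E i)] {f : ∀ i, E i} :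
    Memℓp f 2 ↔ Summable fun i => ‖f i‖ ^ 2 := by
  rw [memℓp_gen_iff (by norm_num), ENNReal.toReal_ofNat]
  simp only [Real.rpow_ofNat]

lemma hasSum_norm_sq {ι : Type*} {E : ι → Type*} [∀ i, NormedAddCommGroup (E i)] (f : lp E 2) :
    HasSum (fun i => ‖f i‖ ^ 2) (‖f‖ ^ 2) := by
  simpa only [ENNReal.toReal_ofNat, Real.rpow_ofNat] using lp.hasSum_norm (by norm_num) f

lemma summable_norm_mul_norm {ι : Type*} {E : ι → Type*} [∀ i, NormedAddCommGroup (E i)]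
    (f g : lp E 2) : Summable fun i => ‖f i‖ * ‖g i‖ := by
  have hconj : (2 : ENNReal).toReal.HolderConjugate (2 : ENNReal).toReal := by
    rw [ENNReal.toReal_ofNat]
    exact Real.HolderConjugate.two_two
  exact lp.summable_mul hconj f g

lemma summable_norm_succ_mul_norm (f g : ℓ²(ℕ, ℂ)) : Summable fun n => ‖f (n + 1)‖ * ‖g n‖ := by
  have hf : Memℓp (fun n => f (n + 1)) 2 :=
    memℓp_two_iff.2 ((summable_nat_add_iff 1).2 (hasSum_norm_sq f).summable)
  exact summable_norm_mul_norm (⟨_, hf⟩ : ℓ²(ℕ, ℂ)) g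

lemma sum_norm_mul_norm_le {ι : Type*} {E F : ι → Type*} [∀ i, NormedAddCommGroup (E i)]
    [∀ i, NormedAddCommGroup (F i)] (x : lp E 2) (y : lp F 2) (s : Finset ι) :
    ∑ i ∈ s, ‖x i‖ * ‖y i‖ ≤ ‖x‖ * ‖y‖ := by
  refine (Real.sum_mul_le_sqrt_mul_sqrt s _ _).trans (mul_le_mul ?_ ?_ (Real.sqrt_nonneg _)
    (norm_nonneg x))
  · exact Real.sqrt_le_iff.2 ⟨norm_nonneg x,
      sum_le_hasSum s (fun _ _ => sq_nonneg _) (hasSum_norm_sq x)⟩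
  · exact Real.sqrt_le_iff.2 ⟨norm_nonneg y,
      sum_le_hasSum s (fun _ _ => sq_nonneg _) (hasSum_norm_sq y)⟩

lemma summable_mul_norm_sq {ι : Type*} {E : ι → Type*} [∀ i, NormedAddCommGroup (E i)]
    {d : ι → ℝ} {B : ℝ} (hB : ∀ i, |d i| ≤ B) (x : lp E 2) :
    Summable fun i => d i * ‖x i‖ ^ 2 := by
  refine ((hasSum_norm_sq x).summable.mul_left B).of_norm_bounded fun i => ?_
  rw [norm_mul, Real.norm_eq_abs, norm_pow, norm_norm]
  exact mul_le_mul_of_nonneg_right (hB i) (sq_nonneg _)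

end SquareSummable

section JacobiOperator

variable {a b : ℕ → ℝ}

/-- The potential `dₙ = bₙ - aₙ₋₁ - aₙ`, with `a₋₁ = 0`, in the decomposition `C = D* a D + d`. -/
def potential (a b : ℕ → ℝ) : ℕ → ℝ
  | 0 => b 0 - a 0
  | n + 1 => b (n + 1) - a n - a (n + 1)

lemma jacobiAct_eq_vertexSum_add (x : ℕ → ℂ) (n : ℕ) :
    jacobiAct a b x n = vertexSum (fun k => a k * edgeSum x k) n + potential a b n * x n := by
  cases n <;> simp only [jacobiAct, vertexSum, edgeSum, potential] <;> push_cast <;> ring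

lemma sum_jacobiAct_mul (x v : ℕ → ℂ) (N : ℕ) :
    ∑ n ∈ Finset.range (N + 1), jacobiAct a b x n * v n
      = ∑ n ∈ Finset.range N, a n * edgeSum x n * edgeSum v n + a N * edgeSum x N * v N
        + ∑ n ∈ Finset.range (N + 1), potential a b n * x n * v n := by
  simp only [jacobiAct_eq_vertexSum_add, add_mul, Finset.sum_add_distrib]
  rw [sum_vertexSum_mul]

lemma sum_jacobiAct_mul_sub (x v : ℕ → ℂ) (N : ℕ) :
    ∑ n ∈ Finset.range (N + 1), (jacobiAct a b x n * v n - x n * jacobiAct a b v n)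
      = a N * (x (N + 1) * v N - v (N + 1) * x N) := by
  have hcomm : ∑ n ∈ Finset.range (N + 1), x n * jacobiAct a b v n
      = ∑ n ∈ Finset.range (N + 1), jacobiAct a b v n * x n := by simp only [mul_comm]
  rw [Finset.sum_sub_distrib, hcomm, sum_jacobiAct_mul, sum_jacobiAct_mul]
  simp only [mul_right_comm _ (edgeSum v _) (edgeSum x _), mul_right_comm _ (v _) (x _)]
  simp only [edgeSum]
  ring

lemma jacobiAct_add (x y : ℕ → ℂ) : jacobiAct a b (x + y) = jacobiAct a b x + jacobiAct a b y := by
  ext n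
  cases n <;> simp only [jacobiAct, Pi.add_apply] <;> ring

lemma jacobiAct_smul (c : ℂ) (x : ℕ → ℂ) : jacobiAct a b (c • x) = c • jacobiAct a b x := by
  ext n
  cases n <;> simp only [jacobiAct, Pi.smul_apply, smul_eq_mul] <;> ring

lemma jacobiAct_star (x : ℕ → ℂ) : jacobiAct a b (star x) = star (jacobiAct a b x) := by
  ext n
  cases n <;> simp [jacobiAct]

/-- The Jacobi matrix as an operator in `ℓ²` with its maximal domain. -/
def jacobiOp (a b : ℕ → ℝ) : ℓ²(ℕ, ℂ) →ₗ.[ℂ] ℓ²(ℕ, ℂ) where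
  domain :=
    { carrier := {x | Memℓp (jacobiAct a b x) 2}
      add_mem' := fun hx hy => by
        simpa only [Set.mem_ofPred_eq, lp.coeFn_add, jacobiAct_add] using hx.add hy
      zero_mem' := by
        have h0 : jacobiAct a b 0 = 0 := by simpa only [zero_smul] using jacobiAct_smul 0 0
        simpa only [Set.mem_ofPred_eq, lp.coeFn_zero, h0] using zero_memℓp
      smul_mem' := fun c x hx => by
        simpa only [Set.mem_ofPred_eq, lp.coeFn_smul, jacobiAct_smul] using hx.const_smul c }
  toFun :=
    { toFun := fun x => ⟨jacobiAct a b x, x.2⟩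
      map_add' := fun x y => Subtype.ext (jacobiAct_add x y)
      map_smul' := fun c x => Subtype.ext (jacobiAct_smul c x) }

lemma mem_domain_jacobiOp {x : ℓ²(ℕ, ℂ)} :
    x ∈ (jacobiOp a b).domain ↔ Memℓp (jacobiAct a b x) 2 := Iff.rfl

lemma coe_jacobiOp (x : (jacobiOp a b).domain) : ⇑(jacobiOp a b x) = jacobiAct a b x := rfl

lemma spectrumW_jacobiAct :
    spectrumW (fun _ => 1) (jacobiAct a b) = unboundedSpectrum (jacobiOp a b) := by
  have hmem : ∀ f, MemL2w (fun _ => 1) f ↔ Memℓp f 2 := fun f => by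
    simp only [MemL2w, one_mul, memℓp_two_iff]
  ext l
  refine not_congr (and_congr ?_ ?_)
  · rw [injective_iff_map_eq_zero]
    constructor
    · intro h x hx
      refine Subtype.ext (Subtype.ext (h _ ⟨(hmem _).2 x.1.2, (hmem _).2 x.2⟩ ?_))
      exact congrArg Subtype.val (sub_eq_zero.1 hx)
    · intro h x hx hlx
      have := h ⟨⟨x, (hmem x).1 hx.1⟩, (hmem _).1 hx.2⟩ (sub_eq_zero.2 (Subtype.ext hlx))
      exact congrArg (fun y : (jacobiOp a b).domain => ⇑(y : ℓ²(ℕ, ℂ))) this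
  · constructor
    · intro h y
      obtain ⟨x, ⟨hx, hTx⟩, hxy⟩ := h y ((hmem _).2 y.2)
      exact ⟨⟨⟨x, (hmem x).1 hx⟩, (hmem _).1 hTx⟩, Subtype.ext hxy⟩
    · intro h y hy
      obtain ⟨x, hx⟩ := h ⟨y, (hmem y).1 hy⟩
      exact ⟨x, ⟨(hmem _).2 x.1.2, (hmem _).2 x.2⟩, congrArg Subtype.val hx⟩

section Carleman

variable (ha : ∀ n, 0 < a n) (hdiv : ¬ Summable fun n => 1 / a n)
include ha hdiv

/-- Green's formula has no boundary term at infinity under Carleman's condition. -/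
lemma tsum_jacobiAct_mul {x v : ℕ → ℂ} (hx : Memℓp x 2) (hTx : Memℓp (jacobiAct a b x) 2)
    (hv : Memℓp v 2) (hTv : Memℓp (jacobiAct a b v) 2) :
    ∑' n, jacobiAct a b x n * v n = ∑' n, x n * jacobiAct a b v n := by
  let x' : ℓ²(ℕ, ℂ) := ⟨x, hx⟩
  let v' : ℓ²(ℕ, ℂ) := ⟨v, hv⟩
  let Tx' : ℓ²(ℕ, ℂ) := ⟨_, hTx⟩
  let Tv' : ℓ²(ℕ, ℂ) := ⟨_, hTv⟩
  have hs₁ : Summable fun n => jacobiAct a b x n * v n :=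
    .of_norm (by simpa only [norm_mul] using summable_norm_mul_norm Tx' v')
  have hs₂ : Summable fun n => x n * jacobiAct a b v n :=
    .of_norm (by simpa only [norm_mul] using summable_norm_mul_norm x' Tv')
  have hbdry : Summable fun n => ‖x (n + 1)‖ * ‖v n‖ + ‖v (n + 1)‖ * ‖x n‖ :=
    (summable_norm_succ_mul_norm x' v').add (summable_norm_succ_mul_norm v' x')
  rw [← sub_eq_zero, ← hs₁.tsum_sub hs₂, ← norm_le_zero_iff]
  refine le_of_forall_gt_imp_ge_of_dense fun c hc => ?_
  have hlim := ((hs₁.sub hs₂).hasSum.tendsto_sum_nat.comp (tendsto_add_atTop_nat 1)).norm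
  refine le_of_tendsto_of_frequently hlim ?_
  refine (frequently_mul_lt_of_summable ha hdiv hbdry hc).mono fun N hN => le_trans ?_ hN.le
  rw [Function.comp_apply, sum_jacobiAct_mul_sub, norm_mul, Complex.norm_real,
    Real.norm_of_nonneg (ha N).le]
  gcongr
  · exact (ha N).le
  · simpa only [norm_mul] using norm_sub_le (x (N + 1) * v N) (v (N + 1) * x N)

lemma jacobiOp_isFormalAdjoint : (jacobiOp a b).IsFormalAdjoint (jacobiOp a b) := by
  intro x y
  have hTx : Memℓp (jacobiAct a b (star ⇑(x : ℓ²(ℕ, ℂ)))) 2 := by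
    rw [jacobiAct_star]
    exact x.2.star_mem
  have h := tsum_jacobiAct_mul ha hdiv (lp.memℓp (x : ℓ²(ℕ, ℂ))).star_mem hTx (lp.memℓp _) y.2
  simp only [jacobiAct_star, Pi.star_apply] at h
  simp only [lp.inner_eq_tsum, coe_jacobiOp, RCLike.inner_apply', starRingEnd_apply]
  exact h

end Carleman

lemma jacobiAct_single_eq_zero {n k : ℕ} (hk : n + 1 < k) (c : ℂ) :
    jacobiAct a b (Pi.single n c) k = 0 := by
  obtain ⟨k, rfl⟩ : ∃ j, k = j + 1 := ⟨k - 1, by omega⟩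
  simp only [jacobiAct, Pi.single_apply]
  rw [if_neg (by omega), if_neg (by omega), if_neg (by omega)]
  ring

lemma single_mem_domain_jacobiOp (n : ℕ) (c : ℂ) :
    (lp.single 2 n c : ℓ²(ℕ, ℂ)) ∈ (jacobiOp a b).domain := by
  rw [mem_domain_jacobiOp, lp.coeFn_single, memℓp_two_iff]
  refine summable_of_ne_finset_zero (s := Finset.range (n + 2)) fun k hk => ?_
  rw [jacobiAct_single_eq_zero (not_lt.1 (mt Finset.mem_range.2 hk)), norm_zero, sq, mul_zero]

lemma dense_domain_jacobiOp : Dense ((jacobiOp a b).domain : Set ℓ²(ℕ, ℂ)) := fun x =>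
  mem_closure_of_tendsto (lp.hasSum_single ENNReal.ofNat_ne_top x)
    (.of_forall fun _ => Submodule.sum_mem _ fun n _ => single_mem_domain_jacobiOp n (x n))

lemma inner_jacobiOp_single (y : ℓ²(ℕ, ℂ)) (n : ℕ) :
    inner ℂ y (jacobiOp a b ⟨_, single_mem_domain_jacobiOp n 1⟩) = star (jacobiAct a b y n) := by
  let e : ℕ → ℂ := Pi.single n 1
  have hgreen := sum_jacobiAct_mul_sub (a := a) (b := b) (star ⇑y) e (n + 1)
  have he : ∀ k, n < k → e k = 0 := fun k hk => Pi.single_eq_of_ne' hk.ne 1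
  rw [he _ (by omega), he _ (by omega), mul_zero, zero_mul, sub_zero, mul_zero,
    Finset.sum_sub_distrib, sub_eq_zero, jacobiAct_star] at hgreen
  simp only [lp.inner_eq_tsum, coe_jacobiOp, lp.coeFn_single, RCLike.inner_apply',
    starRingEnd_apply]
  rw [tsum_eq_sum (s := Finset.range (n + 2)) fun k hk => by
    rw [jacobiAct_single_eq_zero (not_lt.1 (mt Finset.mem_range.2 hk)), mul_zero]]
  refine hgreen.symm.trans ?_
  simp [e, Pi.single_apply]

theorem isSelfAdjoint_jacobiOp (ha : ∀ n, 0 < a n) (hdiv : ¬ Summable fun n => 1 / a n) :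
    IsSelfAdjoint (jacobiOp a b) := by
  refine LinearPMap.isSelfAdjoint_def.2 (le_antisymm ?_
    ((jacobiOp_isFormalAdjoint ha hdiv).le_adjoint dense_domain_jacobiOp))
  have hact : ∀ y : (jacobiOp a b).adjoint.domain,
      jacobiAct a b y = (jacobiOp a b).adjoint y := fun y => by
    ext n
    have h := LinearPMap.adjoint_isFormalAdjoint dense_domain_jacobiOp y
      ⟨_, single_mem_domain_jacobiOp (a := a) (b := b) n 1⟩
    rw [inner_jacobiOp_single, lp.inner_single_right, RCLike.inner_apply', mul_one] at h
    exact star_injective h.symm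
  refine ⟨fun y hy => ?_, fun y x hyx => ?_⟩
  · rw [mem_domain_jacobiOp, hact ⟨y, hy⟩]
    exact lp.memℓp _
  · exact Subtype.ext ((hact y).symm.trans (by rw [hyx, coe_jacobiOp]))

section Energy

lemma sum_re_inner_jacobiAct (x : ℕ → ℂ) (N : ℕ) :
    ∑ n ∈ Finset.range (N + 1), (inner ℂ (x n) (jacobiAct a b x n)).re
      = ∑ n ∈ Finset.range N, a n * ‖edgeSum x n‖ ^ 2 + a N * (edgeSum x N * star (x N)).re
        + ∑ n ∈ Finset.range (N + 1), potential a b n * ‖x n‖ ^ 2 := by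
  have h := congrArg Complex.re (sum_jacobiAct_mul (a := a) (b := b) x (star x) N)
  have hedge : ∀ n, edgeSum (star x) n = star (edgeSum x n) := fun n => by simp [edgeSum]
  simp only [hedge, Pi.star_apply, mul_assoc, Complex.add_re, Complex.re_sum,
    Complex.re_ofReal_mul, RCLike.star_def, Complex.mul_conj', ← Complex.ofReal_pow,
    Complex.ofReal_re] at h
  simpa only [RCLike.inner_apply, RCLike.star_def] using h

variable (ha : ∀ n, 0 < a n) (hdiv : ¬ Summable fun n => 1 / a n)
include ha hdiv

lemma sum_edge_energy_add_le (x : (jacobiOp a b).domain) {q : ℝ}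
    (hq : HasSum (fun n => potential a b n * ‖(x : ℓ²(ℕ, ℂ)) n‖ ^ 2) q) (N : ℕ) :
    ∑ n ∈ Finset.range N, a n * ‖edgeSum ⇑(x : ℓ²(ℕ, ℂ)) n‖ ^ 2 + q
      ≤ (inner ℂ (x : ℓ²(ℕ, ℂ)) (jacobiOp a b x)).re := by
  set u := (x : ℓ²(ℕ, ℂ))
  have hinner := (Complex.hasSum_re (lp.hasSum_inner u (jacobiOp a b x))).tendsto_sum_nat
  have hlim := (hq.tendsto_sum_nat.sub hinner).comp (tendsto_add_atTop_nat 1)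
  have hbdry : Summable fun n => (‖u n‖ + ‖u (n + 1)‖) * ‖u n‖ := by
    simpa only [add_mul] using
      (summable_norm_mul_norm u u).add (summable_norm_succ_mul_norm u u)
  suffices q - (inner ℂ u (jacobiOp a b x)).re
      ≤ -∑ n ∈ Finset.range N, a n * ‖edgeSum u n‖ ^ 2 by linarith
  refine le_of_forall_pos_le_add fun c hc => le_of_tendsto_of_frequently hlim ?_
  refine ((frequently_mul_lt_of_summable ha hdiv hbdry hc).and_eventually
    (eventually_ge_atTop N)).mono fun n hn => ?_
  have hmono : ∑ k ∈ Finset.range N, a k * ‖edgeSum u k‖ ^ 2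
      ≤ ∑ k ∈ Finset.range n, a k * ‖edgeSum u k‖ ^ 2 :=
    Finset.sum_le_sum_of_subset_of_nonneg (Finset.range_mono hn.2)
      fun k _ _ => mul_nonneg (ha k).le (sq_nonneg _)
  have hedge : -((‖u n‖ + ‖u (n + 1)‖) * ‖u n‖) ≤ (edgeSum u n * star (u n)).re := by
    refine (neg_le_neg ?_).trans (neg_le_of_abs_le (Complex.abs_re_le_norm _))
    rw [norm_mul, norm_star]
    gcongr
    exact norm_add_le _ _
  have hedge' := mul_le_mul_of_nonneg_left hedge (ha n).le
  rw [mul_neg] at hedge'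
  have henergy := sum_re_inner_jacobiAct (a := a) (b := b) u n
  simp only [Function.comp_apply, coe_jacobiOp]
  linarith [hn.1]

lemma sum_edge_energy_le {B : ℝ} (hB : ∀ n, |potential a b n| ≤ B) (x : (jacobiOp a b).domain)
    (N : ℕ) :
    ∑ n ∈ Finset.range N, a n * ‖edgeSum ⇑(x : ℓ²(ℕ, ℂ)) n‖ ^ 2
      ≤ ‖(x : ℓ²(ℕ, ℂ))‖ * ‖jacobiOp a b x‖ + B * ‖(x : ℓ²(ℕ, ℂ))‖ ^ 2 := by
  set u := (x : ℓ²(ℕ, ℂ))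
  have hmaj := (hasSum_norm_sq u).mul_left B
  have hq := summable_mul_norm_sq hB u
  have hlow : -(B * ‖u‖ ^ 2) ≤ ∑' n, potential a b n * ‖u n‖ ^ 2 := by
    refine hasSum_le (fun n => ?_) hmaj.neg hq.hasSum
    rw [← neg_mul]
    exact mul_le_mul_of_nonneg_right (neg_le_of_abs_le (hB n)) (sq_nonneg _)
  have henergy := sum_edge_energy_add_le ha hdiv x hq.hasSum N
  have hcs : (inner ℂ u (jacobiOp a b x)).re ≤ ‖u‖ * ‖jacobiOp a b x‖ :=
    re_inner_le_norm (𝕜 := ℂ) _ _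
  linarith

end Energy

section BelowPotential

/-- Restriction of a square-summable sequence to its first `k` entries. -/
def firstEntries (k : ℕ) : ℓ²(ℕ, ℂ) →L[ℂ] (Fin k → ℂ) :=
  ContinuousLinearMap.pi fun i => lp.evalCLM ℂ (fun _ : ℕ => ℂ) 2 i

lemma norm_firstEntries_le (k : ℕ) (x : ℓ²(ℕ, ℂ)) : ‖firstEntries k x‖ ≤ ‖x‖ :=
  (pi_norm_le_iff_of_nonneg (norm_nonneg x)).2 fun i => lp.norm_apply_le_norm two_ne_zero x i

lemma sum_norm_sq_le_firstEntries (k : ℕ) (x : ℓ²(ℕ, ℂ)) :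
    ∑ n ∈ Finset.range k, ‖x n‖ ^ 2 ≤ k * ‖firstEntries k x‖ ^ 2 := by
  rw [Finset.sum_range]
  calc ∑ i : Fin k, ‖x i‖ ^ 2 ≤ ∑ _i : Fin k, ‖firstEntries k x‖ ^ 2 :=
        Finset.sum_le_sum fun i _ => by grw [← norm_le_pi_norm (firstEntries k x) i]; rfl
    _ = k * ‖firstEntries k x‖ ^ 2 := by simp

lemma le_tsum_mul_norm_sq {d : ℕ → ℝ} {B m : ℝ} {k : ℕ} (hB : ∀ n, |d n| ≤ B)
    (hm : ∀ n, k ≤ n → m ≤ d n) (x : ℓ²(ℕ, ℂ)) :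
    m * ‖x‖ ^ 2 - (B + |m|) * k * ‖firstEntries k x‖ ^ 2 ≤ ∑' n, d n * ‖x n‖ ^ 2 := by
  have hsum := (summable_mul_norm_sq hB x).hasSum.sub ((hasSum_norm_sq x).mul_left m)
  simp only [← sub_mul] at hsum
  have htail : ∑ n ∈ Finset.range k, (d n - m) * ‖x n‖ ^ 2
      ≤ ∑' n, d n * ‖x n‖ ^ 2 - m * ‖x‖ ^ 2 :=
    sum_le_hasSum _ (fun n hn => mul_nonneg
      (sub_nonneg.2 (hm n (not_lt.1 (mt Finset.mem_range.2 hn)))) (sq_nonneg _)) hsum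
  have hhead : -((B + |m|) * ∑ n ∈ Finset.range k, ‖x n‖ ^ 2)
      ≤ ∑ n ∈ Finset.range k, (d n - m) * ‖x n‖ ^ 2 := by
    rw [← neg_mul, Finset.mul_sum]
    refine Finset.sum_le_sum fun n _ => mul_le_mul_of_nonneg_right ?_ (sq_nonneg _)
    linarith [neg_le_of_abs_le (hB n), le_abs_self m]
  have hB0 : 0 ≤ B + |m| := add_nonneg ((abs_nonneg _).trans (hB 0)) (abs_nonneg m)
  linarith [mul_le_mul_of_nonneg_left (sum_norm_sq_le_firstEntries k x) hB0]

lemma exists_isRegularPointMod_of_lt (ha : ∀ n, 0 < a n)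
    (hdiv : ¬ Summable fun n => 1 / a n) {B m l : ℝ} (hB : ∀ n, |potential a b n| ≤ B)
    (hm : ∀ᶠ n in atTop, m ≤ potential a b n) (hl : l < m) :
    ∃ k, IsRegularPointMod (firstEntries k) (jacobiOp a b) (l : ℂ) := by
  obtain ⟨k, hk⟩ := eventually_atTop.1 hm
  have hK : 0 ≤ (B + |m|) * k := by
    have := (abs_nonneg _).trans (hB 0)
    positivity
  set K := (B + |m|) * k
  refine ⟨k, (1 + K) / (m - l), fun x => ?_⟩
  set u := (x : ℓ²(ℕ, ℂ))
  have henergy := sum_edge_energy_add_le ha hdiv x (summable_mul_norm_sq hB u).hasSum 0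
  rw [Finset.sum_range_zero, zero_add] at henergy
  have hshift : (inner ℂ u (subScalar (jacobiOp a b) l x)).re
      = (inner ℂ u (jacobiOp a b x)).re - l * ‖u‖ ^ 2 := re_inner_subScalar_ofReal l x
  have hcs : (inner ℂ u (subScalar (jacobiOp a b) l x)).re
      ≤ ‖u‖ * ‖subScalar (jacobiOp a b) l x‖ := re_inner_le_norm (𝕜 := ℂ) _ _
  have hP : K * ‖firstEntries k u‖ ^ 2 ≤ K * (‖u‖ * ‖firstEntries k u‖) := by
    rw [sq]
    gcongr
    exact norm_firstEntries_le k u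
  have hquad : ‖u‖ * ((m - l) * ‖u‖)
      ≤ ‖u‖ * ((1 + K) * (‖subScalar (jacobiOp a b) l x‖ + ‖firstEntries k u‖)) := by
    have h₁ : 0 ≤ K * (‖u‖ * ‖subScalar (jacobiOp a b) l x‖) := by positivity
    have h₂ : 0 ≤ ‖u‖ * ‖firstEntries k u‖ := by positivity
    linarith [le_tsum_mul_norm_sq hB hk u]
  rw [div_mul_eq_mul_div, le_div_iff₀' (sub_pos.2 hl)]
  rcases (norm_nonneg u).eq_or_lt with h0 | hpos
  · rw [← h0, mul_zero]
    positivity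
  · exact le_of_mul_le_mul_left hquad hpos

end BelowPotential

end JacobiOperator

section Quasimodes

variable {a b : ℕ → ℝ} {w : ℕ → ℂ} {l δ ε η : ℝ} {n₀ N : ℕ}

/-- A finitely supported approximate solution `w` of `a D D* w = δ w`, with relative error `ε` in
the weight `1 / a`, whose image `D* w` (a trial vector for `D* a D`) vanishes before `n₀`. -/
structure IsQuasimode (a : ℕ → ℝ) (δ ε : ℝ) (n₀ N : ℕ) (w : ℕ → ℂ) : Prop where
  vertexSum_eq_zero : ∀ n < n₀, vertexSum w n = 0
  eq_zero : ∀ n, N ≤ n → w n = 0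
  sum_norm_sq_pos : 0 < ∑ n ∈ Finset.range (N + 1), ‖vertexSum w n‖ ^ 2
  sum_residual_le :
    ∑ n ∈ Finset.range (N + 1), ‖a n * edgeSum (vertexSum w) n - δ * w n‖ ^ 2 / a n
      ≤ ε ^ 2 * ∑ n ∈ Finset.range (N + 1), ‖vertexSum w n‖ ^ 2

lemma vertexSum_eq_zero_of_lt (hw : ∀ n, N ≤ n → w n = 0) : ∀ n, N < n → vertexSum w n = 0
  | n + 1, hn => by
    rw [vertexSum, hw n (Nat.le_of_lt_succ hn), hw (n + 1) hn.le, add_zero]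

lemma sum_jacobiAct_sub_mul_vertexSum (hw : ∀ n, N ≤ n → w n = 0) (x : ℕ → ℂ) :
    ∑ n ∈ Finset.range (N + 1), (jacobiAct a b x n - l * x n) * vertexSum w n
      = ∑ n ∈ Finset.range (N + 1), (a n * edgeSum (vertexSum w) n - δ * w n) * edgeSum x n
        + ∑ n ∈ Finset.range (N + 1),
            ((potential a b n + δ - l : ℝ) : ℂ) * (x n * vertexSum w n) := by
  have hedge : edgeSum (vertexSum w) N = vertexSum w N := by
    rw [edgeSum, vertexSum_eq_zero_of_lt hw (N + 1) N.lt_succ_self, add_zero]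
  have hJ := sum_jacobiAct_mul (a := a) (b := b) x (vertexSum w) N
  rw [← hedge, ← Finset.sum_range_succ] at hJ
  have hD := sum_vertexSum_mul w x N
  have hDN : ∑ n ∈ Finset.range (N + 1), w n * edgeSum x n
      = ∑ n ∈ Finset.range (N + 1), vertexSum w n * x n := by
    rw [hD, Finset.sum_range_succ, hw N le_rfl, zero_mul, zero_mul]
  have hsplit : ∀ n, (jacobiAct a b x n - l * x n) * vertexSum w n
      = jacobiAct a b x n * vertexSum w n - l * (vertexSum w n * x n) := fun n => by ring
  rw [Finset.sum_congr rfl fun n _ => hsplit n, Finset.sum_sub_distrib, hJ, ← Finset.mul_sum,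
    ← hDN, ← sub_eq_zero]
  simp only [Complex.ofReal_sub, Complex.ofReal_add, sub_mul, add_mul, Finset.sum_sub_distrib,
    Finset.sum_add_distrib, mul_assoc, ← Finset.mul_sum, mul_comm (x _), ← hDN]
  simp only [mul_comm (edgeSum x _)]
  ring

lemma IsQuasimode.exists_star_vertexSum (hw : IsQuasimode a δ ε n₀ N w) :
    ∃ y : ℓ²(ℕ, ℂ), ⇑y = star (vertexSum w) ∧
      ‖y‖ ^ 2 = ∑ n ∈ Finset.range (N + 1), ‖vertexSum w n‖ ^ 2 := by
  have hsum : HasSum (fun n => ‖star (vertexSum w) n‖ ^ 2)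
      (∑ n ∈ Finset.range (N + 1), ‖vertexSum w n‖ ^ 2) := by
    simp only [Pi.star_apply, norm_star]
    refine hasSum_sum_of_ne_finset_zero fun n hn => ?_
    have hn' : N < n := by simpa [Nat.lt_succ_iff] using hn
    rw [vertexSum_eq_zero_of_lt hw.eq_zero n hn', norm_zero, zero_pow two_ne_zero]
  exact ⟨⟨_, memℓp_two_iff.2 hsum.summable⟩, rfl, (hasSum_norm_sq _).unique hsum⟩

lemma IsQuasimode.norm_sq_le (ha : ∀ n, 0 < a n) (hε : 0 ≤ ε) (hw : IsQuasimode a δ ε n₀ N w)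
    (hη : ∀ n, n₀ ≤ n → |potential a b n + δ - l| ≤ η) {y : ℓ²(ℕ, ℂ)}
    (hy : ⇑y = star (vertexSum w))
    (hynorm : ‖y‖ ^ 2 = ∑ n ∈ Finset.range (N + 1), ‖vertexSum w n‖ ^ 2)
    {x : (jacobiOp a b).domain} (hxy : subScalar (jacobiOp a b) (l : ℂ) x = y) :
    ‖y‖ ^ 2 ≤ ε * ‖y‖ *
        √(∑ n ∈ Finset.range (N + 1), a n * ‖edgeSum ⇑(x : ℓ²(ℕ, ℂ)) n‖ ^ 2)
      + η * (‖(x : ℓ²(ℕ, ℂ))‖ * ‖y‖) := by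
  set v := (x : ℓ²(ℕ, ℂ))
  have hpair : ((‖y‖ ^ 2 : ℝ) : ℂ)
      = ∑ n ∈ Finset.range (N + 1), (jacobiAct a b v n - l * v n) * vertexSum w n := by
    rw [hynorm, Complex.ofReal_sum]
    refine Finset.sum_congr rfl fun n _ => ?_
    have hn : jacobiAct a b v n - l * v n = star (vertexSum w n) := by
      rw [← Pi.star_apply, ← hy, ← hxy]
      rfl
    rw [hn, RCLike.star_def, Complex.conj_mul', Complex.ofReal_pow]
  have hres : √(∑ n ∈ Finset.range (N + 1),
      ‖a n * edgeSum (vertexSum w) n - δ * w n‖ ^ 2 / a n) ≤ ε * ‖y‖ := by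
    refine Real.sqrt_le_iff.2 ⟨by positivity, ?_⟩
    rw [mul_pow, hynorm]
    exact hw.sum_residual_le
  have hpot : ‖∑ n ∈ Finset.range (N + 1),
      ((potential a b n + δ - l : ℝ) : ℂ) * (v n * vertexSum w n)‖ ≤ η * (‖v‖ * ‖y‖) := by
    have hη0 := (abs_nonneg _).trans (hη n₀ le_rfl)
    grw [norm_sum_le, ← sum_norm_mul_norm_le v y (Finset.range (N + 1)), Finset.mul_sum]
    refine Finset.sum_le_sum fun n _ => ?_
    rw [norm_mul, norm_mul, hy, Pi.star_apply, norm_star, Complex.norm_real, Real.norm_eq_abs]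
    rcases lt_or_ge n n₀ with hn | hn
    · simp only [hw.vertexSum_eq_zero n hn, norm_zero, mul_zero, le_refl]
    · exact mul_le_mul_of_nonneg_right (hη n hn) (by positivity)
  calc ‖y‖ ^ 2 = ‖((‖y‖ ^ 2 : ℝ) : ℂ)‖ := by rw [Complex.norm_real, norm_pow, norm_norm]
    _ ≤ _ := by
      rw [hpair, sum_jacobiAct_sub_mul_vertexSum (δ := δ) hw.eq_zero]
      grw [norm_add_le, norm_sum_mul_le_sqrt_mul_sqrt ha, hres, hpot]

theorem mem_unboundedSpectrum_jacobiOp_of_isQuasimode (ha : ∀ n, 0 < a n)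
    (hdiv : ¬ Summable fun n => 1 / a n) (hpot : Tendsto (potential a b) atTop (𝓝 (l - δ)))
    (hquasi : ∀ ε > 0, ∀ n₀, ∃ N w, IsQuasimode a δ ε n₀ N w) :
    (l : ℂ) ∈ unboundedSpectrum (jacobiOp a b) := by
  by_contra hl
  obtain ⟨K, hK⟩ := (notMem_unboundedSpectrum_iff (isSelfAdjoint_jacobiOp ha hdiv)).1 hl
  obtain ⟨B, hB⟩ := (Metric.isBounded_range_of_tendsto _ hpot).exists_norm_le
  set K₂ := |K| * (1 + |l| * |K|) + B * |K| ^ 2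
  set ε := 1 / (1 + √K₂ + |K|)
  have hε : 0 < ε := by positivity
  obtain ⟨n₀, hn₀⟩ := Metric.tendsto_atTop.1 hpot ε hε
  have hη : ∀ n, n₀ ≤ n → |potential a b n + δ - l| ≤ ε := fun n hn => by
    simpa only [Real.dist_eq, sub_sub_eq_add_sub] using (hn₀ n hn).le
  obtain ⟨N, w, hw⟩ := hquasi ε hε n₀
  obtain ⟨y, hy, hynorm⟩ := hw.exists_star_vertexSum
  have hypos : 0 < ‖y‖ ^ 2 := hynorm ▸ hw.sum_norm_sq_pos
  obtain ⟨x, hxy⟩ := (not_not.1 hl).2 y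
  have hx : ‖(x : ℓ²(ℕ, ℂ))‖ ≤ |K| * ‖y‖ := by
    grw [hK x, hxy, le_abs_self K]
  have hTx : ‖jacobiOp a b x‖ ≤ (1 + |l| * |K|) * ‖y‖ := by
    have hadd : jacobiOp a b x = y + (l : ℂ) • (x : ℓ²(ℕ, ℂ)) := by
      rw [← hxy, subScalar_apply, sub_add_cancel]
    grw [hadd, norm_add_le, norm_smul, hx, Complex.norm_real, Real.norm_eq_abs]
    linarith
  have henergy : ∑ n ∈ Finset.range (N + 1), a n * ‖edgeSum ⇑(x : ℓ²(ℕ, ℂ)) n‖ ^ 2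
      ≤ K₂ * ‖y‖ ^ 2 := by
    have hB0 : 0 ≤ B := (norm_nonneg _).trans (hB _ ⟨0, rfl⟩)
    grw [sum_edge_energy_le ha hdiv (Set.forall_mem_range.1 hB) x, hTx, hx]
    exact le_of_eq (by ring)
  have hle := hw.norm_sq_le ha hε.le hη hy hynorm hxy
  grw [henergy, hx, Real.sqrt_mul' _ (sq_nonneg _), Real.sqrt_sq (norm_nonneg y)] at hle
  have hlt : ε * (√K₂ + |K|) < 1 := by
    rw [one_div_mul_eq_div, div_lt_one (by positivity)]
    linarith
  linarith [mul_lt_mul_of_pos_right hlt hypos]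

end Quasimodes

section Windows

variable {a : ℕ → ℝ} {ε : ℝ}

lemma summable_of_exists_sum_Ico_le {f g : ℕ → ℝ} (hf : ∀ n, 0 ≤ f n) (hg : ∀ n, 0 ≤ g n) {N : ℕ}
    (h : ∀ m, N ≤ m → ∃ n, m < n ∧ ∑ k ∈ Finset.Ico m n, f k ≤ g m - g n) : Summable f := by
  have hchain : ∀ j, ∃ m, N + j ≤ m ∧ ∑ k ∈ Finset.Ico N m, f k ≤ g N - g m := by
    intro j
    induction j with
    | zero => exact ⟨N, le_rfl, by simp⟩
    | succ j ih =>
      obtain ⟨m, hm, hsum⟩ := ih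
      obtain ⟨n, hmn, hstep⟩ := h m (by omega)
      refine ⟨n, by omega, ?_⟩
      rw [← Finset.sum_Ico_consecutive _ (by omega : N ≤ m) hmn.le]
      linarith
  rw [← summable_nat_add_iff N]
  refine summable_of_sum_range_le (c := g N) (fun n => hf _) fun j => ?_
  obtain ⟨m, hm, hsum⟩ := hchain j
  calc ∑ i ∈ Finset.range j, f (i + N) = ∑ k ∈ Finset.Ico N (N + j), f k := by
        simp only [Finset.sum_Ico_eq_sum_range, Nat.add_sub_cancel_left, add_comm]
    _ ≤ ∑ k ∈ Finset.Ico N m, f k := Finset.sum_le_sum_of_subset_of_nonneg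
        (Finset.Ico_subset_Ico_right hm) fun k _ _ => hf k
    _ ≤ g N := by linarith [hg m]

lemma eventually_one_sub_mul_le (ha : ∀ n, 0 < a n)
    (hvar : Summable fun n => max (-(a (n + 1) / a n - 1)) 0) (hε : 0 < ε) (hε1 : ε < 1) :
    ∀ᶠ m in atTop, ∀ n, m ≤ n → (1 - ε) * a m ≤ a n := by
  set r : ℕ → ℝ := fun n => max (-(a (n + 1) / a n - 1)) 0
  have hr0 : ∀ n, 0 ≤ r n := fun n => le_max_right _ _
  have hstep : ∀ n, (1 - r n) * a n ≤ a (n + 1) := fun n => by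
    rw [← le_div_iff₀ (ha n)]
    linarith [le_max_left (-(a (n + 1) / a n - 1)) 0]
  filter_upwards [(tendsto_sum_nat_add r).eventually (gt_mem_nhds hε)] with m hm n hn
  have htail : ∀ j, ∑ i ∈ Finset.range j, r (i + m) < ε := fun j =>
    (((summable_nat_add_iff m).2 hvar).sum_le_tsum _ fun i _ => hr0 _).trans_lt hm
  have hind : ∀ j, (1 - ∑ i ∈ Finset.range j, r (i + m)) * a m ≤ a (j + m) := by
    intro j
    induction j with
    | zero => simp
    | succ j ih =>
      rw [Finset.sum_range_succ, Nat.succ_add]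
      have hs := htail (j + 1)
      rw [Finset.sum_range_succ] at hs
      set s := ∑ i ∈ Finset.range j, r (i + m)
      have hs0 : 0 ≤ s := Finset.sum_nonneg fun i _ => hr0 _
      calc (1 - (s + r (j + m))) * a m ≤ (1 - r (j + m)) * ((1 - s) * a m) := by
            linarith [mul_nonneg (mul_nonneg (hr0 (j + m)) hs0) (ha m).le]
        _ ≤ (1 - r (j + m)) * a (j + m) := mul_le_mul_of_nonneg_left ih (by linarith)
        _ ≤ a (j + m + 1) := hstep _
  obtain ⟨j, rfl⟩ := Nat.exists_eq_add_of_le' hn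
  refine le_trans (mul_le_mul_of_nonneg_right ?_ (ha m).le) (hind j)
  linarith [htail j]

lemma sum_Ico_one_div_le {c : ℝ} {m n : ℕ} (ha : ∀ n, 0 < a n) (hε : 0 < ε) (hε1 : ε < 1)
    (hmn : m ≤ n) (hlow : ∀ k, m ≤ k → (1 - ε) * a m ≤ a k) (hlen : (n : ℝ) - m ≤ c * √(a m))
    (hgrow : (1 + ε) * a m ≤ a n) :
    ∑ k ∈ Finset.Ico m n, 1 / a k
      ≤ c / ((1 - ε) * (1 - 1 / √(1 + ε))) * (1 / √(a m) - 1 / √(a n)) := by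
  have ham := ha m
  have hε' : 0 < 1 - ε := sub_pos.2 hε1
  have hq : 0 < 1 - 1 / √(1 + ε) := by
    rw [sub_pos, div_lt_one (by positivity), Real.lt_sqrt one_pos.le]
    linarith
  have hsqrt : 1 / √(a n) ≤ 1 / √(1 + ε) / √(a m) := by
    rw [div_div, ← Real.sqrt_mul (by linarith)]
    exact one_div_le_one_div_of_le (Real.sqrt_pos.2 (by positivity)) (Real.sqrt_le_sqrt hgrow)
  set q := 1 / √(1 + ε)
  have hc : 0 ≤ c := by
    refine nonneg_of_mul_nonneg_left (le_trans ?_ hlen) (Real.sqrt_pos.2 ham)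
    exact sub_nonneg.2 (Nat.cast_le.2 hmn)
  calc ∑ k ∈ Finset.Ico m n, 1 / a k ≤ ∑ _k ∈ Finset.Ico m n, 1 / ((1 - ε) * a m) :=
        Finset.sum_le_sum fun k hk =>
          one_div_le_one_div_of_le (mul_pos hε' ham) (hlow k (Finset.mem_Ico.1 hk).1)
    _ = ((n : ℝ) - m) * (1 / ((1 - ε) * a m)) := by
        rw [Finset.sum_const, Nat.card_Ico, nsmul_eq_mul, Nat.cast_sub hmn]
    _ ≤ c * √(a m) * (1 / ((1 - ε) * a m)) := by gcongr
    _ = c / ((1 - ε) * (1 - q)) * (1 / √(a m) - q / √(a m)) := by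
        have hsq := Real.sq_sqrt ham.le
        field_simp
        linear_combination c * hsq
    _ ≤ c / ((1 - ε) * (1 - q)) * (1 / √(a m) - 1 / √(a n)) := by gcongr

/-- There are windows of length `≫ √aₘ` on which `a` is almost constant: otherwise `a` would grow by
a factor over each window, and the sums of `1 / a` over windows would decay geometrically. -/
lemma exists_window (ha : ∀ n, 0 < a n) (hlim : Tendsto a atTop atTop)
    (hdiv : ¬ Summable fun n => 1 / a n)
    (hvar : Summable fun n => max (-(a (n + 1) / a n - 1)) 0)
    (hε : 0 < ε) (hε1 : ε < 1) {R : ℝ} (hR : 0 ≤ R) :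
    ∃ᶠ m in atTop, ∃ L : ℕ, 1 ≤ L ∧ R * √(a m) ≤ L ∧
      ∀ n, m ≤ n → n ≤ m + 4 * L → |a n - a m| ≤ ε * a m := by
  intro hcon
  obtain ⟨N, hN⟩ := eventually_atTop.1
    (hcon.and ((eventually_one_sub_mul_le ha hvar hε hε1).and (hlim.eventually_ge_atTop 1)))
  set C := (4 * R + 8) / ((1 - ε) * (1 - 1 / √(1 + ε)))
  refine hdiv (summable_of_exists_sum_Ico_le (g := fun n => C * (1 / √(a n)))
    (N := N) (fun n => (one_div_pos.2 (ha n)).le) (fun n => ?_) fun m hm => ?_)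
  · have hq : 1 / √(1 + ε) ≤ 1 := by
      rw [div_le_one (by positivity), Real.one_le_sqrt]
      linarith
    have hC := mul_nonneg (sub_pos.2 hε1).le (sub_nonneg.2 hq)
    exact mul_nonneg (div_nonneg (by positivity) hC) (by positivity)
  · obtain ⟨hm_no, hm_low, hm_one⟩ := hN m hm
    set L := ⌈R * √(a m)⌉₊ + 1
    have hL : (L : ℝ) ≤ (R + 2) * √(a m) := by
      have hceil := Nat.ceil_lt_add_one (mul_nonneg hR (Real.sqrt_nonneg (a m)))
      have hsqrt := Real.one_le_sqrt.2 hm_one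
      push_cast [L]
      linarith
    have hRL : R * √(a m) ≤ L := by
      push_cast [L]
      linarith [Nat.le_ceil (R * √(a m))]
    push Not at hm_no
    obtain ⟨n, hmn, hnL, hn⟩ := hm_no L (Nat.le_add_left 1 _) hRL
    have hgrow : (1 + ε) * a m ≤ a n := by
      by_contra hlt
      exact hn.not_ge (abs_le.2 ⟨by linarith [hm_low n hmn], by linarith⟩)
    have hne : m ≠ n := by
      rintro rfl
      linarith [mul_pos hε (ha m)]
    refine ⟨n, lt_of_le_of_ne hmn hne,
      (sum_Ico_one_div_le ha hε hε1 hmn hm_low ?_ hgrow).trans_eq (mul_sub _ _ _)⟩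
    have hnL' : (n : ℝ) ≤ m + 4 * L := mod_cast hnL
    linarith

end Windows

section Plateau

lemma exists_abs_add_sub_le {f : ℝ → ℝ} (hf : ContDiff ℝ 2 f) (hc : HasCompactSupport f) :
    ∃ B, 0 ≤ B ∧ (∀ t h, |f (t + h) - f t| ≤ B * |h|) ∧
      ∀ t h, |f (t + 2 * h) - 2 * f (t + h) + f t| ≤ B * h ^ 2 := by
  have hf' : ContDiff ℝ 1 (deriv f) := ((contDiff_succ_iff_deriv (n := 1)).1 hf).2.2
  have hdiff : Differentiable ℝ f := hf.differentiable two_ne_zero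
  obtain ⟨B₀, hB₀⟩ := hf.lipschitzWith_of_hasCompactSupport hc two_ne_zero
  obtain ⟨B₁, hB₁⟩ := hf'.lipschitzWith_of_hasCompactSupport hc.deriv one_ne_zero
  have hfst : ∀ t h, |f (t + h) - f t| ≤ B₀ * |h| := fun t h => by
    simpa only [Real.norm_eq_abs, add_sub_cancel_left] using hB₀.norm_sub_le (t + h) t
  have hsnd : ∀ t h, |f (t + 2 * h) - 2 * f (t + h) + f t| ≤ B₁ * h ^ 2 := fun t h => by
    have hderiv : ∀ s, HasDerivAt (fun s => f (s + h) - f s) (deriv f (s + h) - deriv f s) s :=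
      fun s => ((hdiff (s + h)).hasDerivAt.comp_add_const s h).sub (hdiff s).hasDerivAt
    have hbound : ∀ s, ‖deriv f (s + h) - deriv f s‖ ≤ B₁ * |h| := fun s => by
      simpa only [Real.norm_eq_abs, add_sub_cancel_left] using hB₁.norm_sub_le (s + h) s
    have hmv := convex_univ.norm_image_sub_le_of_norm_hasDerivWithin_le
      (fun s _ => (hderiv s).hasDerivWithinAt) (fun s _ => hbound s) (Set.mem_univ t)
      (Set.mem_univ (t + h))
    rw [add_sub_cancel_left, Real.norm_eq_abs, Real.norm_eq_abs, mul_assoc, abs_mul_abs_self,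
      ← sq] at hmv
    convert hmv using 2
    ring_nf
  refine ⟨max B₀ B₁, le_max_of_le_left B₀.2, fun t h => (hfst t h).trans ?_,
    fun t h => (hsnd t h).trans ?_⟩
  · gcongr
    exact le_max_left _ _
  · gcongr
    exact le_max_right _ _

/-- A smooth bump equal to `1` on `[-1/2, 1/2]` and supported in `[-1, 1]`. -/
def unitBump : ContDiffBump (0 : ℝ) := ⟨1 / 2, 1, by norm_num, by norm_num⟩

/-- A discrete cutoff, supported in `(m, m + 4L)` and equal to `1` on the middle half. -/
def plateau (m L n : ℕ) : ℝ := unitBump (((n : ℝ) - m - 2 * L) / (2 * L))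

lemma abs_plateau_le_one (m L n : ℕ) : |plateau m L n| ≤ 1 :=
  abs_le.2 ⟨(neg_one_lt_zero.le).trans unitBump.nonneg, unitBump.le_one⟩

lemma plateau_eq_zero {m L n : ℕ} (hL : 1 ≤ L) (h : n ≤ m ∨ m + 4 * L ≤ n) :
    plateau m L n = 0 := by
  have hL0 : (0 : ℝ) < 2 * L := by positivity
  refine unitBump.zero_of_le_dist ?_
  change 1 ≤ _
  rw [Real.dist_eq, sub_zero, abs_div, abs_of_pos hL0, one_le_div hL0, le_abs]
  rcases h with h | h
  · have h' : (n : ℝ) ≤ m := mod_cast h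
    right
    linarith
  · have h' : (m : ℝ) + 4 * L ≤ n := mod_cast h
    left
    linarith

lemma plateau_eq_one {m L n : ℕ} (hL : 1 ≤ L) (hn : m + L ≤ n) (hn' : n ≤ m + 3 * L) :
    plateau m L n = 1 := by
  have hL0 : (0 : ℝ) < 2 * L := by positivity
  have h : (m : ℝ) + L ≤ n := mod_cast hn
  have h' : (n : ℝ) ≤ m + 3 * L := mod_cast hn'
  refine unitBump.one_of_mem_closedBall ?_
  change dist _ _ ≤ 1 / 2
  rw [Real.dist_eq, sub_zero, abs_div, abs_of_pos hL0, div_le_div_iff₀ hL0 two_pos, one_mul]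
  have habs : |(n : ℝ) - m - 2 * L| ≤ L := abs_le.2 ⟨by linarith, by linarith⟩
  linarith

lemma exists_abs_plateau_sub_le : ∃ B : ℝ, 0 ≤ B ∧ ∀ m L n : ℕ, 1 ≤ L →
    |plateau m L (n + 1) - plateau m L n| ≤ B / L ∧
    |plateau m L (n + 2) - 2 * plateau m L (n + 1) + plateau m L n| ≤ B / (L : ℝ) ^ 2 := by
  obtain ⟨B, hB, hfst, hsnd⟩ :=
    exists_abs_add_sub_le (unitBump.contDiff (n := 2)) unitBump.hasCompactSupport
  refine ⟨B, hB, fun m L n hL => ?_⟩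
  have hL0 : (0 : ℝ) < L := by positivity
  set t := ((n : ℝ) - m - 2 * L) / (2 * L)
  have hshift : ∀ j : ℕ, plateau m L (n + j) = unitBump (t + j * (1 / (2 * L))) := fun j => by
    rw [plateau]
    congr 1
    push_cast [t]
    ring
  have h0 := hshift 0
  have h1 := hshift 1
  have h2 := hshift 2
  simp only [add_zero, Nat.cast_zero, Nat.cast_one, Nat.cast_ofNat, zero_mul, one_mul] at h0 h1 h2
  rw [h0, h1, h2]
  constructor
  · refine (hfst _ _).trans ?_
    rw [abs_of_pos (by positivity), mul_one_div]
    gcongr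
    linarith
  · refine (hsnd _ _).trans ?_
    rw [div_pow, one_pow, mul_one_div]
    gcongr
    linarith

end Plateau

section PlaneWaves

/-- The plane wave `(-z)ⁿ`, for `z` near `1` on the unit circle, modulated by the amplitude `φ`.
The sign makes it nearly annihilated by `edgeSum` and `vertexSum`. -/
def wavePacket (z : ℂ) (φ : ℕ → ℝ) (n : ℕ) : ℂ := (-z) ^ n * φ n

variable {z : ℂ}

lemma exists_norm_eq_one_norm_sub_one_eq {s : ℝ} (hs : 0 ≤ s) (hs2 : s ≤ 2) :
    ∃ z : ℂ, ‖z‖ = 1 ∧ ‖z - 1‖ = s := by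
  refine ⟨Complex.exp (Complex.I * (2 * Real.arcsin (s / 2) : ℝ)),
    Complex.norm_exp_I_mul_ofReal _, ?_⟩
  rw [Complex.norm_exp_I_mul_ofReal_sub_one, mul_div_cancel_left₀ _ two_ne_zero,
    Real.sin_arcsin (by linarith) (by linarith), mul_div_cancel₀ _ two_ne_zero,
    Real.norm_of_nonneg hs]

lemma norm_vertexSum_wavePacket (hz : ‖z‖ = 1) {φ : ℕ → ℝ} {n : ℕ} (h : φ n = 1)
    (h' : φ (n + 1) = 1) : ‖vertexSum (wavePacket z φ) (n + 1)‖ = ‖z - 1‖ := by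
  have hfactor : vertexSum (wavePacket z φ) (n + 1) = (-z) ^ n * (1 - z) := by
    simp only [vertexSum, wavePacket, h, h', Complex.ofReal_one]
    ring
  rw [hfactor, norm_mul, norm_pow, norm_neg, hz, one_pow, one_mul, norm_sub_rev]

lemma norm_edgeSum_vertexSum_wavePacket_sub_le (hz : ‖z‖ = 1) (φ : ℕ → ℝ) (n : ℕ) :
    ‖edgeSum (vertexSum (wavePacket z φ)) (n + 1) - (‖z - 1‖ ^ 2 : ℝ) * wavePacket z φ (n + 1)‖
      ≤ |φ (n + 2) - 2 * φ (n + 1) + φ n| + 2 * ‖z - 1‖ * |φ (n + 2) - φ (n + 1)| := by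
  have hconj : z * star z = 1 := by
    rw [RCLike.star_def, Complex.mul_conj', hz, Complex.ofReal_one, one_pow]
  have hsq : ((‖z - 1‖ ^ 2 : ℝ) : ℂ) = 2 - z - star z := by
    rw [Complex.ofReal_pow, ← Complex.mul_conj', map_sub, map_one, ← RCLike.star_def]
    linear_combination hconj
  have hfactor : edgeSum (vertexSum (wavePacket z φ)) (n + 1)
      - (‖z - 1‖ ^ 2 : ℝ) * wavePacket z φ (n + 1)
      = -(-z) ^ (n + 1) * (star z * (φ (n + 2) - 2 * φ (n + 1) + φ n : ℝ)
        + (z - star z) * (φ (n + 2) - φ (n + 1) : ℝ)) := by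
    rw [hsq]
    simp only [edgeSum, vertexSum, wavePacket]
    push_cast
    linear_combination -(-z) ^ n * φ n * hconj
  have him : ‖z - star z‖ ≤ 2 * ‖z - 1‖ := by
    calc ‖z - star z‖ = ‖(z - 1) - star (z - 1)‖ := by
          rw [star_sub, star_one, sub_sub_sub_cancel_right]
      _ ≤ 2 * ‖z - 1‖ := (norm_sub_le _ _).trans (by rw [norm_star, two_mul])
  rw [hfactor, norm_mul, norm_neg, norm_pow, norm_neg, hz, one_pow, one_mul]
  refine (norm_add_le _ _).trans (add_le_add ?_ ?_)
  · rw [norm_mul, norm_star, hz, one_mul, Complex.norm_real, Real.norm_eq_abs]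
  · rw [norm_mul, Complex.norm_real, Real.norm_eq_abs]
    gcongr

end PlaneWaves

section QuasimodeConstruction

variable {a : ℕ → ℝ} {z : ℂ} {m L : ℕ} {δ ε : ℝ}

lemma wavePacket_plateau_eq_zero (hL : 1 ≤ L) {n : ℕ} (hn : n ≤ m ∨ m + 4 * L ≤ n) :
    wavePacket z (plateau m L) n = 0 := by
  rw [wavePacket, plateau_eq_zero hL hn, Complex.ofReal_zero, mul_zero]

lemma vertexSum_wavePacket_plateau_eq_zero (hL : 1 ≤ L) :
    ∀ n ≤ m, vertexSum (wavePacket z (plateau m L)) n = 0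
  | 0, h => wavePacket_plateau_eq_zero hL (.inl h)
  | n + 1, h => by
    rw [vertexSum, wavePacket_plateau_eq_zero hL (.inl (n.le_succ.trans h)),
      wavePacket_plateau_eq_zero hL (.inl h), add_zero]

lemma le_sum_norm_sq_vertexSum_wavePacket (hz : ‖z‖ = 1) (hL : 1 ≤ L) :
    2 * L * ‖z - 1‖ ^ 2 ≤ ∑ n ∈ Finset.range (m + 4 * L + 1),
      ‖vertexSum (wavePacket z (plateau m L)) n‖ ^ 2 := by
  rw [Finset.sum_range_succ']
  refine le_add_of_le_of_nonneg ?_ (sq_nonneg _)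
  calc 2 * L * ‖z - 1‖ ^ 2 = ∑ _n ∈ Finset.Ico (m + L) (m + 3 * L), ‖z - 1‖ ^ 2 := by
        rw [Finset.sum_const, Nat.card_Ico, nsmul_eq_mul,
          show m + 3 * L - (m + L) = 2 * L by omega, Nat.cast_mul, Nat.cast_ofNat]
    _ = ∑ n ∈ Finset.Ico (m + L) (m + 3 * L),
          ‖vertexSum (wavePacket z (plateau m L)) (n + 1)‖ ^ 2 := by
        refine Finset.sum_congr rfl fun n hn => ?_
        rw [Finset.mem_Ico] at hn
        rw [norm_vertexSum_wavePacket hz (plateau_eq_one hL hn.1 hn.2.le)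
          (plateau_eq_one hL (by omega) hn.2)]
    _ ≤ _ := Finset.sum_le_sum_of_subset_of_nonneg (fun n hn => by
        rw [Finset.mem_Ico] at hn
        exact Finset.mem_range.2 (by omega)) fun n _ _ => sq_nonneg _

lemma residual_wavePacket_plateau_eq_zero (hm : 0 < m) (hL : 1 ≤ L) (α β : ℂ) {n : ℕ}
    (hn : n < m ∨ m + 4 * L < n) :
    α * edgeSum (vertexSum (wavePacket z (plateau m L))) n
      - β * wavePacket z (plateau m L) n = 0 := by
  have hw : ∀ k, k ≤ m ∨ m + 4 * L ≤ k → wavePacket z (plateau m L) k = 0 := fun k =>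
    wavePacket_plateau_eq_zero hL
  rcases n with _ | n <;> simp only [edgeSum, vertexSum]
  · rw [hw 0 (by omega), hw (0 + 1) (by omega)]
    ring
  · rw [hw n (by omega), hw (n + 1) (by omega), hw (n + 1 + 1) (by omega)]
    ring

lemma sum_range_norm_sq_div_le {f : ℕ → ℂ} {A κ : ℝ} (hL : 1 ≤ L) (hA : 0 < A)
    (hf : ∀ n, n < m ∨ m + 4 * L < n → f n = 0)
    (hfκ : ∀ n, m ≤ n → n ≤ m + 4 * L → ‖f n‖ ≤ κ)
    (ha : ∀ n, m ≤ n → n ≤ m + 4 * L → A / 2 ≤ a n) :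
    ∑ n ∈ Finset.range (m + 4 * L + 1), ‖f n‖ ^ 2 / a n ≤ 10 * L * κ ^ 2 / A := by
  have hL1 : (1 : ℝ) ≤ L := mod_cast hL
  calc ∑ n ∈ Finset.range (m + 4 * L + 1), ‖f n‖ ^ 2 / a n
      = ∑ n ∈ Finset.Icc m (m + 4 * L), ‖f n‖ ^ 2 / a n := by
        refine (Finset.sum_subset (fun n hn => ?_) fun n _ hn => ?_).symm
        · exact Finset.mem_range_succ_iff.2 (Finset.mem_Icc.1 hn).2
        · rw [Finset.mem_Icc, not_and_or, not_le, not_le] at hn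
          rw [hf n hn, norm_zero, zero_pow two_ne_zero, zero_div]
    _ ≤ ∑ _n ∈ Finset.Icc m (m + 4 * L), κ ^ 2 / (A / 2) := by
        refine Finset.sum_le_sum fun n hn => ?_
        obtain ⟨hmn, hnL⟩ := Finset.mem_Icc.1 hn
        have hbound := pow_le_pow_left₀ (norm_nonneg _) (hfκ n hmn hnL) 2
        exact div_le_div₀ (sq_nonneg κ) hbound (half_pos hA) (ha n hmn hnL)
    _ = (4 * L + 1) * (κ ^ 2 / (A / 2)) := by
        rw [Finset.sum_const, Nat.card_Icc, nsmul_eq_mul,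
          show m + 4 * L + 1 - m = 4 * L + 1 by omega]
        push_cast
        rfl
    _ ≤ 5 * L * (κ ^ 2 / (A / 2)) := by gcongr; linarith
    _ = 10 * L * κ ^ 2 / A := by ring

lemma isQuasimode_wavePacket {κ : ℝ} {n₀ : ℕ} (hδ : 0 < δ) (hm : 0 < m) (hn₀ : n₀ ≤ m)
    (hL : 1 ≤ L) (hz : ‖z‖ = 1) (ham : 0 < a m) (hzδ : a m * ‖z - 1‖ ^ 2 = δ)
    (hlow : ∀ n, m ≤ n → n ≤ m + 4 * L → a m / 2 ≤ a n)
    (hres : ∀ n, m ≤ n → n ≤ m + 4 * L → ‖a n * edgeSum (vertexSum (wavePacket z (plateau m L))) n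
      - δ * wavePacket z (plateau m L) n‖ ≤ κ) (hκ : 5 * κ ^ 2 ≤ ε ^ 2 * δ) :
    IsQuasimode a δ ε n₀ (m + 4 * L) (wavePacket z (plateau m L)) := by
  have hzδ' : ‖z - 1‖ ^ 2 = δ / a m := by rw [← hzδ, mul_div_cancel_left₀ _ ham.ne']
  have hmass := le_sum_norm_sq_vertexSum_wavePacket (m := m) hz hL
  rw [hzδ'] at hmass
  refine ⟨fun n hn => vertexSum_wavePacket_plateau_eq_zero hL n (hn.le.trans hn₀),
    fun n hn => wavePacket_plateau_eq_zero hL (.inr hn), lt_of_lt_of_le (by positivity) hmass, ?_⟩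
  calc _ ≤ 10 * L * κ ^ 2 / a m := sum_range_norm_sq_div_le hL ham
        (fun _ hn => residual_wavePacket_plateau_eq_zero hm hL _ _ hn) hres hlow
    _ = 2 * L * (5 * κ ^ 2) / a m := by ring
    _ ≤ 2 * L * (ε ^ 2 * δ) / a m := by gcongr
    _ = ε ^ 2 * (2 * L * (δ / a m)) := by ring
    _ ≤ _ := by gcongr

lemma norm_mul_edgeSum_vertexSum_wavePacket_sub_le {α A η : ℝ} {φ : ℕ → ℝ} {n : ℕ}
    (hz : ‖z‖ = 1) (hη : η ≤ 1) (hα : |α - A| ≤ η * A) (hA : 0 ≤ A) (hφ : |φ (n + 1)| ≤ 1) :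
    ‖α * edgeSum (vertexSum (wavePacket z φ)) (n + 1)
        - (A * ‖z - 1‖ ^ 2 : ℝ) * wavePacket z φ (n + 1)‖
      ≤ 2 * A * (|φ (n + 2) - 2 * φ (n + 1) + φ n| + 2 * ‖z - 1‖ * |φ (n + 2) - φ (n + 1)|)
        + η * (A * ‖z - 1‖ ^ 2) := by
  have hsplit : (α : ℂ) * edgeSum (vertexSum (wavePacket z φ)) (n + 1)
        - (A * ‖z - 1‖ ^ 2 : ℝ) * wavePacket z φ (n + 1)
      = α * (edgeSum (vertexSum (wavePacket z φ)) (n + 1)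
          - (‖z - 1‖ ^ 2 : ℝ) * wavePacket z φ (n + 1))
        + ((α - A) * ‖z - 1‖ ^ 2 : ℝ) * wavePacket z φ (n + 1) := by
    push_cast
    ring
  have hα' : |α| ≤ 2 * A := by
    calc |α| = |A + (α - A)| := by rw [add_sub_cancel]
      _ ≤ |A| + η * A := (abs_add_le _ _).trans (by gcongr)
      _ ≤ 2 * A := by rw [abs_of_nonneg hA]; linarith [mul_le_mul_of_nonneg_right hη hA]
  have hw : ‖wavePacket z φ (n + 1)‖ ≤ 1 := by
    rw [wavePacket, norm_mul, norm_pow, norm_neg, hz, one_pow, one_mul, Complex.norm_real]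
    exact hφ
  rw [hsplit]
  refine (norm_add_le _ _).trans (add_le_add ?_ ?_)
  · rw [norm_mul, Complex.norm_real, Real.norm_eq_abs]
    gcongr
    exact norm_edgeSum_vertexSum_wavePacket_sub_le hz φ n
  · rw [norm_mul, Complex.norm_real, Real.norm_eq_abs, abs_mul, abs_of_nonneg (sq_nonneg ‖z - 1‖)]
    calc |α - A| * ‖z - 1‖ ^ 2 * ‖wavePacket z φ (n + 1)‖ ≤ η * A * ‖z - 1‖ ^ 2 * 1 := by
          gcongr
          exact mul_nonneg ((abs_nonneg _).trans hα) (sq_nonneg _)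
      _ = η * (A * ‖z - 1‖ ^ 2) := by ring

/-- The two terms of the wave packet's error scale like `A / Λ²` and `√A / Λ`. -/
lemma exists_cutoff_error_le {B κ : ℝ} (hB : 0 ≤ B) (hκ : 0 < κ) :
    ∃ R, 1 ≤ R ∧ ∀ {A s Λ : ℝ}, 0 < A → 0 ≤ s → A * s ^ 2 = δ → R * √A ≤ Λ →
      2 * A * (B / Λ ^ 2 + 2 * s * (B / Λ)) ≤ κ := by
  set C := 2 * B + 4 * B * √δ
  refine ⟨max 1 (C / κ), le_max_left _ _, fun {A s Λ} hA hs hδ hΛ => ?_⟩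
  set R := max 1 (C / κ)
  have hR : 1 ≤ R := le_max_left _ _
  have hsδ : √δ = √A * s := by rw [← hδ, Real.sqrt_mul hA.le, Real.sqrt_sq hs]
  calc 2 * A * (B / Λ ^ 2 + 2 * s * (B / Λ))
      ≤ 2 * A * (B / (R * √A) ^ 2 + 2 * s * (B / (R * √A))) := by gcongr
    _ = 2 * B / R / R + 4 * B * √δ / R := by
        rw [mul_pow, Real.sq_sqrt hA.le, hsδ]
        field_simp
        linear_combination -(4 * B * R * s) * Real.sq_sqrt hA.le
    _ ≤ 2 * B / R + 4 * B * √δ / R := by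
        gcongr
        exact div_le_self (by positivity) hR
    _ = C / R := (add_div _ _ _).symm
    _ ≤ κ := (div_le_iff₀' (by positivity)).2 ((div_le_iff₀ hκ).1 (le_max_right _ _))

lemma exists_isQuasimode (ha : ∀ n, 0 < a n) (hlim : Tendsto a atTop atTop)
    (hdiv : ¬ Summable fun n => 1 / a n)
    (hvar : Summable fun n => max (-(a (n + 1) / a n - 1)) 0) (hδ : 0 < δ) (hε : 0 < ε) (n₀ : ℕ) :
    ∃ N w, IsQuasimode a δ ε n₀ N w := by
  obtain ⟨B, hB, hplateau⟩ := exists_abs_plateau_sub_le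
  obtain ⟨κ, hκ, hκε⟩ : ∃ κ > 0, 5 * κ ^ 2 ≤ ε ^ 2 * δ := by
    refine ⟨ε * √(δ / 5), by positivity, le_of_eq ?_⟩
    rw [mul_pow, Real.sq_sqrt (by positivity)]
    ring
  obtain ⟨R, hR, hcutoff⟩ := exists_cutoff_error_le (δ := δ) hB (half_pos hκ)
  set η := min (1 / 2) (κ / (2 * δ))
  have hη : η ≤ 1 / 2 := min_le_left _ _
  have hηδ : η * δ ≤ κ / 2 := by
    grw [show η ≤ κ / (2 * δ) from min_le_right _ _]
    exact le_of_eq (by field_simp)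
  obtain ⟨m, ⟨L, hL, hRL, hwindow⟩, hδm, hn₀, hm⟩ :=
    ((exists_window ha hlim hdiv hvar (ε := η) (by positivity) (by linarith)
      (zero_le_one.trans hR)).and_eventually
      ((hlim.eventually_ge_atTop δ).and
        ((eventually_ge_atTop n₀).and (eventually_gt_atTop 0)))).exists
  have ham := ha m
  obtain ⟨z, hz, hzs⟩ := exists_norm_eq_one_norm_sub_one_eq (Real.sqrt_nonneg (δ / a m))
    (Real.sqrt_le_iff.2 ⟨two_pos.le, by rw [div_le_iff₀ ham]; linarith⟩)
  have hzδ : a m * ‖z - 1‖ ^ 2 = δ := by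
    rw [hzs, Real.sq_sqrt (by positivity), mul_div_cancel₀ _ ham.ne']
  refine ⟨_, _, isQuasimode_wavePacket hδ hm hn₀ hL hz ham hzδ (fun n hmn hnL => ?_)
    (fun n hmn hnL => ?_) hκε⟩
  · have hlow := neg_le_of_abs_le (hwindow n hmn hnL)
    linarith [mul_le_mul_of_nonneg_right hη ham.le]
  · obtain ⟨k, rfl⟩ := Nat.exists_eq_add_of_le' (hm.trans_le hmn)
    have herror := norm_mul_edgeSum_vertexSum_wavePacket_sub_le hz (by linarith)
      (hwindow (k + 1) hmn hnL) ham.le (abs_plateau_le_one m L (k + 1))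
    rw [hzδ] at herror
    grw [herror, (hplateau m L k hL).2, (hplateau m L (k + 1) hL).1,
      hcutoff ham (norm_nonneg _) hzδ hRL, hηδ, add_halves]

end QuasimodeConstruction

section EssentialSpectrum

variable {a b : ℕ → ℝ} {M : ℝ}

lemma tendsto_potential (hM : Tendsto (fun n => a n - b (n + 1) + a (n + 1)) atTop (𝓝 M)) :
    Tendsto (potential a b) atTop (𝓝 (-M)) := by
  rw [← tendsto_add_atTop_iff_nat 1]
  refine hM.neg.congr fun n => ?_
  rw [potential]
  ring

lemma im_eq_zero_of_accPt {S : Set ℂ} (hS : ∀ z ∈ S, z.im = 0) {z : ℂ}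
    (hz : AccPt z (𝓟 S)) : z.im = 0 :=
  (isClosed_eq Complex.continuous_im continuous_const).closure_subset_iff.2 hS
    (mem_closure_iff_clusterPt.2 hz.clusterPt)

lemma accPt_ofReal_of_Ioi_subset {S : Set ℂ} (hS : ∀ l, M < l → (l : ℂ) ∈ S) {l : ℝ}
    (hl : M ≤ l) : AccPt (l : ℂ) (𝓟 S) := by
  have hreal : AccPt l (𝓟 (Set.Ioi l)) := by
    rw [accPt_principal_iff_nhdsWithin, Set.sdiff_singleton_eq_self Set.self_notMem_Ioi]
    infer_instance
  refine (hreal.map Complex.continuous_ofReal.continuousAt Complex.ofReal_injective).mono ?_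
  rw [Filter.map_principal, Filter.principal_mono]
  rintro _ ⟨r, hr, rfl⟩
  exact hS r (hl.trans_lt hr)

theorem essSpectrumW_jacobiAct_subset (ha : ∀ n, 0 < a n) (hdiv : ¬ Summable fun n => 1 / a n)
    (hpot : Tendsto (potential a b) atTop (𝓝 M)) :
    essSpectrumW (fun _ => 1) (jacobiAct a b) ⊆ (fun r : ℝ => (r : ℂ)) '' Set.Ici M := by
  intro z hz
  have hT := isSelfAdjoint_jacobiOp (b := b) ha hdiv
  rw [essSpectrumW, spectrumW_jacobiAct, Set.mem_ofPred_eq] at hz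
  obtain ⟨l, rfl⟩ : ∃ l : ℝ, (l : ℂ) = z := ⟨z.re, Complex.ext rfl
    (im_eq_zero_of_accPt (fun _ => im_eq_zero_of_mem_unboundedSpectrum hT) hz).symm⟩
  refine ⟨l, Set.mem_Ici.2 (le_of_not_gt fun hl => ?_), rfl⟩
  obtain ⟨B, hB⟩ := (Metric.isBounded_range_of_tendsto _ hpot).exists_norm_le
  obtain ⟨m, hlm, hmM⟩ := exists_between hl
  obtain ⟨k, hk⟩ := exists_isRegularPointMod_of_lt ha hdiv (Set.forall_mem_range.1 hB)
    (hpot.eventually_const_le hmM) hlm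
  exact hk.not_accPt_unboundedSpectrum hT
    (isCompactOperator_of_locallyCompactSpace_dom _) hz

theorem subset_essSpectrumW_jacobiAct (ha : ∀ n, 0 < a n) (hlim : Tendsto a atTop atTop)
    (hdiv : ¬ Summable fun n => 1 / a n)
    (hvar : Summable fun n => max (-(a (n + 1) / a n - 1)) 0)
    (hpot : Tendsto (potential a b) atTop (𝓝 M)) :
    (fun r : ℝ => (r : ℂ)) '' Set.Ici M ⊆ essSpectrumW (fun _ => 1) (jacobiAct a b) := by
  have hmem : ∀ l : ℝ, M < l → (l : ℂ) ∈ unboundedSpectrum (jacobiOp a b) := fun l hl =>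
    mem_unboundedSpectrum_jacobiOp_of_isQuasimode (δ := l - M) ha hdiv
      (by rwa [sub_sub_cancel]) fun ε hε n₀ =>
        exists_isQuasimode ha hlim hdiv hvar (sub_pos.2 hl) hε n₀
  rintro _ ⟨l, hl, rfl⟩
  rw [essSpectrumW, spectrumW_jacobiAct, Set.mem_ofPred_eq]
  exact accPt_ofReal_of_Ioi_subset hmem hl

end EssentialSpectrum

/-- Theorem (towards Chihara's conjecture): under (a)–(d) the essential spectrum of
the Jacobi matrix equals `[-M, ∞)`. -/
theorem jacobi_essential_spectrum_halfline
    (a b : ℕ → ℝ) (ha : ∀ n, 0 < a n) (M : ℝ)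
    (h1 : Tendsto a atTop atTop)
    (h2 : ¬ Summable fun n : ℕ => 1 / a n)
    (h3 : Summable fun n : ℕ => max (-(a (n + 1) / a n - 1)) 0)
    (h4 : Tendsto (fun n => a n - b (n + 1) + a (n + 1)) atTop (𝓝 M)) :
    essSpectrumW (fun _ => 1) (jacobiAct a b) = (fun r : ℝ => (r : ℂ)) '' Set.Ici (-M) := by
  have hpot := tendsto_potential h4
  exact Set.Subset.antisymm (essSpectrumW_jacobiAct_subset ha h2 hpot)
    (subset_essSpectrumW_jacobiAct ha h1 h2 h3 hpot)
end
end
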